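/- arXiv:2412.16004 — 3 statements merged into one kernel-verified Lean document; each statement's English description precedes it below -/
import Mathlib

section
/- Let n ≥ 2 and R a commutative ring with invertible element q^{1/n}, q := (q^{1/n})^n. Write B_q(M_n) for the covariantized algebra of O_q(M_n), and let d̲_q denote the element of B_q(M_n) corresponding to the quantum determinant d_q ∈ O_q(M_n) under the identity map of the common underlying R-module; d̲_q is central in B_q(M_n). Define O_q(SL_n) := O_q(M_n)/(d_q − 1) and O_q(GL_n) := O_q(M_n)[d_q^{−1}] (localization at the central grouplike element d_q); the standard dual quasitriangular structure of O_q(M_n) descends/extends to these. Then: (1) the covariantized algebra of O_q(SL_n) is isomorphic to the quotient B_q(M_n)/(d̲_q − 1) of B_q(M_n) by the two-sided ideal generated by d̲_q − 1; (2) the covariantized algebra of O_q(GL_n) is isomorphic to B_q(M_n)[t]/(d̲_q ⬝ t − 1), the algebra obtained from B_q(M_n) by adjoining a central element t subject to d̲_q ⬝ t = 1. -/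
open scoped TensorProduct BigOperators

noncomputable section

universe u

/-- Integer power `q^m` of an invertible element `qq` of `R`, as an element of `R`. -/
def qzpow {R : Type u} [CommRing R] (qq : Rˣ) (m : ℤ) : R := ((qq ^ m : Rˣ) : R)

/-- The defining relations of the `q`-matrix bialgebra `O_q(M_n)` for a family
`y i j` (the image of the generator `x^i_j`; the first index is the upper one). -/
def OqMnRels {R : Type u} [CommRing R] {B : Type u} [Ring B] [Algebra R B]
    (n : ℕ) (qq : Rˣ) (y : Fin n → Fin n → B) : Prop :=
  (∀ i j k : Fin n, j < k → y i k * y i j = (qq : R) • (y i j * y i k)) ∧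
  (∀ i j k : Fin n, j < k → y k i * y j i = (qq : R) • (y j i * y k i)) ∧
  (∀ i j k l : Fin n, i < j → k < l → y i l * y j k = y j k * y i l) ∧
  (∀ i j k l : Fin n, i < j → k < l →
    y j l * y i k - y i k * y j l = ((qq : R) - ((qq⁻¹ : Rˣ) : R)) • (y i l * y j k))

/-- `ρ` is a dual quasitriangular structure on the bialgebra `A`.  All conditions
involving the Sweedler components of the comultiplication are expressed by
quantifying over finite representations of `comul`. -/
def IsDQT {R : Type u} [CommRing R] {A : Type u} [Ring A] [Bialgebra R A]
    (ρ : A →ₗ[R] A →ₗ[R] R) : Prop :=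
  (∀ (a b c : A) (s : Finset ℕ) (c1 c2 : ℕ → A),
      Coalgebra.comul (R := R) c = ∑ i ∈ s, c1 i ⊗ₜ[R] c2 i →
      ρ (a * b) c = ∑ i ∈ s, ρ a (c1 i) * ρ b (c2 i)) ∧
  (∀ (a b c : A) (s : Finset ℕ) (a1 a2 : ℕ → A),
      Coalgebra.comul (R := R) a = ∑ i ∈ s, a1 i ⊗ₜ[R] a2 i →
      ρ a (b * c) = ∑ i ∈ s, ρ (a1 i) c * ρ (a2 i) b) ∧
  (∀ a : A, ρ a 1 = Coalgebra.counit (R := R) a) ∧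
  (∀ a : A, ρ 1 a = Coalgebra.counit (R := R) a) ∧
  (∀ (a b : A) (s t : Finset ℕ) (a1 a2 b1 b2 : ℕ → A),
      Coalgebra.comul (R := R) a = ∑ i ∈ s, a1 i ⊗ₜ[R] a2 i →
      Coalgebra.comul (R := R) b = ∑ j ∈ t, b1 j ⊗ₜ[R] b2 j →
      ∑ i ∈ s, ∑ j ∈ t, ρ (a2 i) (b2 j) • (b1 j * a1 i) =
        ∑ i ∈ s, ∑ j ∈ t, ρ (a1 i) (b1 j) • (a2 i * b2 j))

/-- `ρt` is the convolution inverse of `ρ` in `Hom(A ⊗ A^cop, R)`. -/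
def IsCopConvInv {R : Type u} [CommRing R] {A : Type u} [Ring A] [Bialgebra R A]
    (ρ ρt : A →ₗ[R] A →ₗ[R] R) : Prop :=
  ∀ (a b : A) (s t : Finset ℕ) (a1 a2 b1 b2 : ℕ → A),
    Coalgebra.comul (R := R) a = ∑ i ∈ s, a1 i ⊗ₜ[R] a2 i →
    Coalgebra.comul (R := R) b = ∑ j ∈ t, b1 j ⊗ₜ[R] b2 j →
    (∑ i ∈ s, ∑ j ∈ t, ρt (a1 i) (b2 j) * ρ (a2 i) (b1 j)
        = Coalgebra.counit (R := R) a * Coalgebra.counit (R := R) b) ∧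
    (∑ i ∈ s, ∑ j ∈ t, ρ (a1 i) (b2 j) * ρt (a2 i) (b1 j)
        = Coalgebra.counit (R := R) a * Coalgebra.counit (R := R) b)

/-- The twofold comultiplication `a ↦ a₍₁₎ ⊗ (a₍₂₎ ⊗ a₍₃₎)`. -/
def comul2 {R : Type u} [CommRing R] {A : Type u} [Ring A] [Bialgebra R A] :
    A →ₗ[R] A ⊗[R] (A ⊗[R] A) :=
  (TensorProduct.map LinearMap.id (Coalgebra.comul (R := R))).comp (Coalgebra.comul (R := R))

/-- `cmul` is the covariantized (reflection equation) product
`a ⬝ b = a₍₂₎ b₍₃₎ 𝓡̃(a₍₃₎, b₍₁₎) 𝓡(a₍₁₎, b₍₂₎)` built from `ρ` and its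
convolution inverse `ρt` in `Hom(A ⊗ A^cop, R)`, expressed via finite
representations of the iterated comultiplication. -/
def CovChar {R : Type u} [CommRing R] {A : Type u} [Ring A] [Bialgebra R A]
    (ρ ρt : A →ₗ[R] A →ₗ[R] R) (cmul : A → A → A) : Prop :=
  ∀ (a b : A) (s t : Finset ℕ) (a1 a2 a3 b1 b2 b3 : ℕ → A),
    comul2 (R := R) a = ∑ i ∈ s, a1 i ⊗ₜ[R] (a2 i ⊗ₜ[R] a3 i) →
    comul2 (R := R) b = ∑ j ∈ t, b1 j ⊗ₜ[R] (b2 j ⊗ₜ[R] b3 j) →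
    cmul a b = ∑ i ∈ s, ∑ j ∈ t, (ρt (a3 i) (b1 j) * ρ (a1 i) (b2 j)) • (a2 i * b3 j)

/-- The value `𝓡(x^i_j, x^k_l)` of the standard dual quasitriangular structure of
`O_q(M_n)`, where `qr = q^{1/n}` is the chosen `n`-th root of `q = qr^n`:
`𝓡(x^i_j, x^k_l) = q^{−1/n} (δ^i_j δ^k_l q^{δ^j_l} + (q − q^{−1}) δ_{j>l} δ^i_l δ^k_j)`. -/
def RmatVal {R : Type u} [CommRing R] (n : ℕ) (qr : Rˣ) (i j k l : Fin n) : R :=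
  ((qr⁻¹ : Rˣ) : R) *
    ((if i = j then 1 else 0) * (if k = l then 1 else 0) *
        (if j = l then ((qr ^ n : Rˣ) : R) else 1)
      + (((qr ^ n : Rˣ) : R) - (((qr ^ n)⁻¹ : Rˣ) : R)) * (if l < j then 1 else 0) *
          (if i = l then 1 else 0) * (if k = j then 1 else 0))

/-- Product of a nonempty list under a binary operation, bracketed to the right. -/
def cchain {A : Type u} (cmul : A → A → A) : A → List A → A
  | a, [] => a
  | a, b :: l => cmul a (cchain cmul b l)

/-- Product of a list under the binary operation `cmul`, equal to `one` on the empty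
list (and not otherwise using `one`). -/
def cListProd {A : Type u} (cmul : A → A → A) (one : A) : List A → A
  | [] => one
  | a :: l => cchain cmul a l

/-- `N`-th power with respect to the binary operation `cmul`. -/
def cpow {A : Type u} (cmul : A → A → A) (one : A) (a : A) (N : ℕ) : A :=
  cListProd cmul one (List.replicate N a)

/-- The number `l(σ)` of inversions of a permutation. -/
def inversions {n : ℕ} (σ : Equiv.Perm (Fin n)) : ℕ :=
  ((Finset.univ : Finset (Fin n × Fin n)).filter (fun p => p.1 < p.2 ∧ σ p.2 < σ p.1)).card

/-- `e(σ) = #{i : σ(i) > i}`. -/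
def exceedances {n : ℕ} (σ : Equiv.Perm (Fin n)) : ℕ :=
  (Finset.univ.filter (fun i : Fin n => i < σ i)).card

/-- The quantum determinant `d_q = ∑_{σ ∈ S_n} (−q)^{−l(σ)} x^1_{σ(1)} x^2_{σ(2)} ⋯ x^n_{σ(n)}`,
computed with the original product of the ambient algebra. -/
def qdet {R : Type u} [CommRing R] {A : Type u} [Ring A] [Algebra R A] {n : ℕ}
    (qq : Rˣ) (x : Fin n → Fin n → A) : A :=
  ∑ σ : Equiv.Perm (Fin n),
    ((((-qq)⁻¹ : Rˣ) : R) ^ inversions σ) •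
      ((List.finRange n).map (fun i => x i (σ i))).prod

/-!
Coacting on the top monomial of the quantum exterior algebra shows that `d_q` is group-like. The
pairings of `𝓡` with the generators on one side form the vector representations of `O_q(M_n)`, in
which the generators act by triangular matrices; so `d_q` acts by the product of the diagonal
generators, and this is the identity thanks to the normalization of `𝓡` by `q^{-1/n}`. Hence `𝓡`
pairs `d_q` with everything through the counit. It follows that `d_q` is central and that its
covariantized product with any element is the ordinary one, and the same holds for its image and
the inverse of its image in `O_q(GL_n)`.

A homomorphism of dual quasitriangular bialgebras is, as a linear map, a homomorphism of
covariantizations. The left ideals generated by `d_q - 1` and by its counterpart in `B_q(M_n)`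
therefore coincide, and both are the kernel of the projection to `SL_n`. For `GL_n`, a localization
at a central element is recognised by two properties: every element is a fraction, and the kernel is
the torsion. Both involve products with powers of `d_q` and of its inverse only, so they too are
unaffected by covariantization.
-/

section QuantumExterior

variable {R H B ι : Type*} [CommRing R] [Ring H] [Algebra R H] [Ring B] [Algebra R B]
  [LinearOrder ι]

/-- The relations `η_i² = 0` and `η_j η_i = p η_i η_j` for `i < j` of the generators of a quantum
exterior algebra. The quantum determinant corresponds to the parameter `p = (-q)⁻¹`. -/
structure IsQExterior (p : R) (η : ι → H) : Prop where
  mul_self : ∀ i, η i * η i = 0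
  mul_of_lt : ∀ ⦃i j⦄, i < j → η j * η i = p • (η i * η j)

/-- The standard monomial `η_S` of a finite set `S`, with factors in increasing order. -/
def orderedProd (η : ι → H) (S : Finset ι) : H :=
  ((S.sort (· ≤ ·)).map η).prod

/-- The structure constant of the quantum exterior algebra with
`η_j η_S = insertCoeff p j S • η_{S ∪ {j}}`. -/
def insertCoeff (p : R) (j : ι) (S : Finset ι) : R :=
  if j ∈ S then 0 else p ^ (S.filter (· < j)).card

/-- The coefficient of the standard monomial in the monomial of quantum exterior generators indexed
by a list. -/
def sortCoeff (p : R) : List ι → R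
  | [] => 1
  | j :: L => insertCoeff p j L.toFinset * sortCoeff p L

theorem orderedProd_insert_of_forall_lt (η : ι → H) {m : ι} {S : Finset ι}
    (hm : ∀ b ∈ S, m < b) : orderedProd η (insert m S) = η m * orderedProd η S := by
  rw [orderedProd, Finset.sort_insert _ (fun b hb => (hm b hb).le) fun h => (hm m h).false,
    List.map_cons, List.prod_cons, orderedProd]

theorem insertCoeff_of_mem (p : R) {j : ι} {S : Finset ι} (hj : j ∈ S) : insertCoeff p j S = 0 :=
  if_pos hj

theorem insertCoeff_of_forall_lt (p : R) {j : ι} {S : Finset ι} (hj : ∀ b ∈ S, j < b) :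
    insertCoeff p j S = 1 := by
  rw [insertCoeff, if_neg fun h => (hj j h).false,
    Finset.filter_false_of_mem fun b hb => (hj b hb).not_gt, Finset.card_empty, pow_zero]

theorem insertCoeff_insert_of_lt (p : R) {j m : ι} (S : Finset ι) (h : j < m) :
    insertCoeff p j (insert m S) = insertCoeff p j S := by
  simp [insertCoeff, Finset.filter_insert, h.ne, h.not_gt]

theorem insertCoeff_insert_of_gt (p : R) {j m : ι} {S : Finset ι} (h : m < j) (hm : m ∉ S) :
    insertCoeff p j (insert m S) = p * insertCoeff p j S := by
  have hm' : m ∉ S.filter (· < j) := fun h => hm (Finset.mem_filter.1 h).1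
  simp [insertCoeff, Finset.filter_insert, h, h.ne', Finset.card_insert_of_notMem hm', pow_succ']

theorem insertCoeff_mul_insertCoeff (p : R) {i j : ι} (S : Finset ι) (h : i < j) :
    insertCoeff p i S * insertCoeff p j (insert i S) =
      p * (insertCoeff p j S * insertCoeff p i (insert j S)) := by
  rw [insertCoeff_insert_of_lt p S h]
  by_cases hi : i ∈ S
  · simp [insertCoeff_of_mem p hi]
  · rw [insertCoeff_insert_of_gt p h hi]
    ring

namespace IsQExterior

variable {p : R} {η : ι → H}

theorem mul_orderedProd (h : IsQExterior p η) (j : ι) (S : Finset ι) :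
    η j * orderedProd η S = insertCoeff p j S • orderedProd η (insert j S) := by
  induction S using Finset.induction_on_min with
  | empty => simp [insertCoeff, orderedProd]
  | insert m S hm ih =>
    rcases lt_trichotomy j m with hj | rfl | hj
    · have hlt : ∀ b ∈ insert m S, j < b :=
        Finset.forall_mem_insert _ _ _ |>.2 ⟨hj, fun b hb => hj.trans (hm b hb)⟩
      rw [orderedProd_insert_of_forall_lt η hlt, insertCoeff_of_forall_lt p hlt, one_smul]
    · rw [insertCoeff_of_mem p (Finset.mem_insert_self j S), zero_smul,
        orderedProd_insert_of_forall_lt η hm, ← mul_assoc, h.mul_self, zero_mul]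
    · have hlt : ∀ b ∈ insert j S, m < b := Finset.forall_mem_insert _ _ _ |>.2 ⟨hj, hm⟩
      calc η j * orderedProd η (insert m S)
          = p • (η m * (η j * orderedProd η S)) := by
            rw [orderedProd_insert_of_forall_lt η hm, ← mul_assoc, h.mul_of_lt hj,
              smul_mul_assoc, mul_assoc]
        _ = (p * insertCoeff p j S) • (η m * orderedProd η (insert j S)) := by
            rw [ih, mul_smul_comm, smul_smul]
        _ = insertCoeff p j (insert m S) • orderedProd η (insert j (insert m S)) := by
            rw [Finset.insert_comm, orderedProd_insert_of_forall_lt η hlt,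
              insertCoeff_insert_of_gt p hj fun h => (hm m h).false]

theorem prod_map (h : IsQExterior p η) (L : List ι) :
    (L.map η).prod = sortCoeff p L • orderedProd η L.toFinset := by
  induction L with
  | nil => simp [sortCoeff, orderedProd]
  | cons j L ih =>
    rw [List.map_cons, List.prod_cons, ih, mul_smul_comm, h.mul_orderedProd, smul_smul,
      List.toFinset_cons, sortCoeff, mul_comm]

end IsQExterior

theorem sortCoeff_of_not_nodup (p : R) {L : List ι} (h : ¬ L.Nodup) : sortCoeff p L = 0 := by
  induction L with
  | nil => simp at h
  | cons j L ih =>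
    rw [sortCoeff]
    by_cases hj : j ∈ L
    · rw [insertCoeff_of_mem p (List.mem_toFinset.2 hj), zero_mul]
    · rw [ih fun hL => h (List.nodup_cons.2 ⟨hj, hL⟩), mul_zero]

theorem sortCoeff_of_pairwise_lt (p : R) {L : List ι} (h : L.Pairwise (· < ·)) :
    sortCoeff p L = 1 := by
  induction L with
  | nil => rfl
  | cons j L ih =>
    obtain ⟨hj, hL⟩ := List.pairwise_cons.1 h
    rw [sortCoeff, ih hL, mul_one, insertCoeff_of_forall_lt p (by simpa using hj)]

theorem insertCoeff_toFinset_ofFn (p : R) {m : ℕ} {f : Fin m → ι} (hf : Function.Injective f)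
    {j : ι} (hj : j ∉ Set.range f) :
    insertCoeff p j (List.ofFn f).toFinset = p ^ ∑ i, if f i < j then 1 else 0 := by
  have himage : (List.ofFn f).toFinset = Finset.univ.image f := by
    ext b
    simp
  rw [himage, insertCoeff, if_neg (by simpa using hj), Finset.filter_image,
    Finset.card_image_of_injective _ hf, Finset.card_filter]

theorem sortCoeff_ofFn (p : R) {m : ℕ} {f : Fin m → ι} (hf : Function.Injective f) :
    sortCoeff p (List.ofFn f) = p ^ ∑ i, ∑ j, if i < j ∧ f j < f i then 1 else 0 := by
  induction m with
  | zero => simp [sortCoeff]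
  | succ m ih =>
    have hs : Function.Injective fun i => f (Fin.succ i) := hf.comp (Fin.succ_injective m)
    have h0 : f 0 ∉ Set.range fun i => f (Fin.succ i) := by
      rintro ⟨i, hi⟩
      exact Fin.succ_ne_zero i (hf hi)
    rw [List.ofFn_succ, sortCoeff, insertCoeff_toFinset_ofFn p hs h0, ih hs, ← pow_add]
    simp only [Fin.sum_univ_succ, false_and, if_false, zero_add, Fin.succ_pos,
      true_and, Fin.not_lt_zero, Fin.succ_lt_succ_iff]

theorem inversions_eq_sum {n : ℕ} (σ : Equiv.Perm (Fin n)) :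
    inversions σ = ∑ i, ∑ j, if i < j ∧ σ j < σ i then 1 else 0 := by
  rw [inversions, Finset.card_filter, Fintype.sum_prod_type]

namespace IsQExterior

variable {p : R}

theorem prod_map_of_not_injective {n : ℕ} {η : ι → H} (h : IsQExterior p η) {f : Fin n → ι}
    (hf : ¬ Function.Injective f) : ((List.finRange n).map fun i => η (f i)).prod = 0 := by
  have := h.prod_map (List.ofFn f)
  rwa [sortCoeff_of_not_nodup p fun hL => hf (List.nodup_ofFn.1 hL), zero_smul,
    List.ofFn_eq_map, List.map_map] at this

theorem prod_map_perm {n : ℕ} {η : Fin n → H} (h : IsQExterior p η) (σ : Equiv.Perm (Fin n)) :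
    ((List.finRange n).map fun i => η (σ i)).prod =
      p ^ inversions σ • ((List.finRange n).map η).prod := by
  have htop : (List.ofFn σ).toFinset = Finset.univ := by
    ext b
    simpa [List.mem_ofFn] using σ.surjective b
  have := h.prod_map (List.ofFn σ)
  rwa [sortCoeff_ofFn p σ.injective, ← inversions_eq_sum, htop, orderedProd, Fin.sort_univ,
    List.ofFn_eq_map, List.map_map] at this

end IsQExterior

theorem list_prod_map_tmul {κ : Type*} (L : List κ) (f : κ → B) (g : κ → H) :
    (L.map fun i => f i ⊗ₜ[R] g i).prod = (L.map f).prod ⊗ₜ[R] (L.map g).prod := by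
  induction L with
  | nil => simp [Algebra.TensorProduct.one_def]
  | cons a L ih => simp [ih]

theorem IsQExterior.sum_mul_sum [Fintype ι] {p : R} {η : ι → H} (h : IsQExterior p η)
    (a b : ι → B) :
    (∑ k, a k ⊗ₜ[R] η k) * (∑ l, b l ⊗ₜ[R] η l) =
      ∑ k, ∑ l, if k < l then (a k * b l + p • (a l * b k)) ⊗ₜ[R] (η k * η l) else 0 := by
  have hterm (k l) : (a k ⊗ₜ[R] η k) * (b l ⊗ₜ[R] η l) =
      (if k < l then (a k * b l) ⊗ₜ[R] (η k * η l) else 0) +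
        (if l < k then (p • (a k * b l)) ⊗ₜ[R] (η l * η k) else 0) := by
    rw [Algebra.TensorProduct.tmul_mul_tmul]
    rcases lt_trichotomy k l with hkl | rfl | hkl
    · simp [hkl, hkl.not_gt]
    · simp [h.mul_self]
    · simp [hkl, hkl.not_gt, h.mul_of_lt hkl, TensorProduct.smul_tmul]
  simp only [Finset.sum_mul_sum, hterm, Finset.sum_add_distrib]
  rw [add_comm, Finset.sum_comm, add_comm]
  simp only [← Finset.sum_add_distrib]
  refine Finset.sum_congr rfl fun k _ => Finset.sum_congr rfl fun l _ => ?_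
  split_ifs <;> simp [TensorProduct.add_tmul]

/-- Left multiplication by the `j`-th generator of the quantum exterior algebra, realised on the
free module with basis the standard monomials. -/
def extOp (p : R) (j : ι) : Module.End R (Finset ι →₀ R) :=
  Finsupp.linearCombination R fun S => Finsupp.single (insert j S) (insertCoeff p j S)

theorem extOp_single (p : R) (j : ι) (S : Finset ι) (c : R) :
    extOp p j (Finsupp.single S c) = Finsupp.single (insert j S) (c * insertCoeff p j S) := by
  rw [extOp, Finsupp.linearCombination_single, Finsupp.smul_single, smul_eq_mul]

theorem isQExterior_extOp (p : R) : IsQExterior p (extOp (ι := ι) p) where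
  mul_self i := Finsupp.lhom_ext fun S c => by
    rw [Module.End.mul_apply, extOp_single, extOp_single,
      insertCoeff_of_mem p (Finset.mem_insert_self i S), mul_zero, Finsupp.single_zero,
      LinearMap.zero_apply]
  mul_of_lt i j hij := Finsupp.lhom_ext fun S c => by
    rw [Module.End.mul_apply, LinearMap.smul_apply, Module.End.mul_apply, extOp_single,
      extOp_single, extOp_single, extOp_single, Finset.insert_comm, mul_assoc,
      insertCoeff_mul_insertCoeff p S hij, Finsupp.smul_single, smul_eq_mul, mul_left_comm,
      mul_assoc c]

theorem prod_map_extOp_single_empty (p : R) (L : List ι) :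
    (L.map (extOp p)).prod (Finsupp.single ∅ 1) = Finsupp.single L.toFinset (sortCoeff p L) := by
  induction L with
  | nil => simp [sortCoeff]
  | cons j L ih =>
    rw [List.map_cons, List.prod_cons, Module.End.mul_apply, ih, extOp_single, sortCoeff,
      List.toFinset_cons, mul_comm]

theorem exists_functional_prod_map_extOp_eq_one (p : R) {L : List ι} (hL : L.Pairwise (· < ·)) :
    ∃ θ : Module.End R (Finset ι →₀ R) →ₗ[R] R, θ (L.map (extOp p)).prod = 1 := by
  refine ⟨Finsupp.lapply L.toFinset ∘ₗ LinearMap.applyₗ (Finsupp.single ∅ 1), ?_⟩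
  simp [prod_map_extOp_single_empty, sortCoeff_of_pairwise_lt p hL]

end QuantumExterior

theorem tmul_right_cancel_of_functional {R M N : Type*} [CommRing R] [AddCommGroup M]
    [Module R M] [AddCommGroup N] [Module R N] (θ : N →ₗ[R] R) {e : N} (he : θ e = 1) {m m' : M}
    (h : m ⊗ₜ[R] e = m' ⊗ₜ[R] e) : m = m' := by
  have := congrArg (TensorProduct.rid R M ∘ TensorProduct.map LinearMap.id θ) h
  simpa [he] using this

section QuantumDeterminant

variable {R : Type u} [CommRing R] {B C : Type u} [Ring B] [Algebra R B] [Ring C] [Algebra R C]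
  {n : ℕ} {qq : Rˣ} {y : Fin n → Fin n → B}

theorem map_qdet (qq : Rˣ) (f : B →ₐ[R] C) (y : Fin n → Fin n → B) :
    f (qdet qq y) = qdet qq fun i j => f (y i j) := by
  simp [qdet, map_list_prod, List.map_map, Function.comp_def]

namespace IsQExterior

variable {η : Fin n → C}

theorem prod_sum_tmul (h : IsQExterior (((-qq)⁻¹ : Rˣ) : R) η) (z : Fin n → Fin n → B) :
    ((List.finRange n).map fun i => ∑ k, z i k ⊗ₜ[R] η k).prod =
      qdet qq z ⊗ₜ[R] ((List.finRange n).map η).prod := by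
  have hexpand := (MultilinearMap.mkPiAlgebraFin R n (B ⊗[R] C)).map_sum
    fun i k => z i k ⊗ₜ[R] η k
  simp only [MultilinearMap.mkPiAlgebraFin_apply, List.ofFn_eq_map, list_prod_map_tmul] at hexpand
  rw [hexpand, qdet, TensorProduct.sum_tmul]
  symm
  refine Fintype.sum_of_injective (fun σ : Equiv.Perm (Fin n) => (σ : Fin n → Fin n))
    DFunLike.coe_injective _ _ (fun f hf => ?_) fun σ => ?_
  · have hni : ¬ Function.Injective f := fun hi =>
      hf ⟨Equiv.ofBijective f (Finite.injective_iff_bijective.1 hi), rfl⟩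
    rw [h.prod_map_of_not_injective hni, TensorProduct.tmul_zero]
  · rw [h.prod_map_perm, TensorProduct.smul_tmul]

theorem coaction (h : IsQExterior (((-qq)⁻¹ : Rˣ) : R) η) (hy : OqMnRels n qq y) :
    IsQExterior (((-qq)⁻¹ : Rˣ) : R) fun i => ∑ k, y i k ⊗ₜ[R] η k := by
  obtain ⟨hrow, -, hcomm, hcross⟩ := hy
  rw [inv_neg, Units.val_neg] at h ⊢
  refine ⟨fun i => ?_, fun i j hij => ?_⟩
  · rw [h.sum_mul_sum]
    refine Finset.sum_eq_zero fun k _ => Finset.sum_eq_zero fun l _ => ?_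
    split_ifs with hkl
    · rw [hrow i k l hkl, smul_smul, neg_mul, Units.inv_mul]
      simp
    · rfl
  · simp only [h.sum_mul_sum, Finset.smul_sum]
    refine Finset.sum_congr rfl fun k _ => Finset.sum_congr rfl fun l _ => ?_
    split_ifs with hkl
    · rw [TensorProduct.smul_tmul']
      congr 1
      rw [← hcomm i j k l hij hkl, sub_eq_iff_eq_add.1 (hcross i j k l hij hkl)]
      have hq := congrArg (· • (y i l * y j k)) (Units.inv_mul qq)
      linear_combination (norm := module) -hq
    · rw [smul_zero]

end IsQExterior

-- Coact twice on the top monomial of the quantum exterior algebra, and compare coefficients.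
theorem qdet_sum_tmul (hy : OqMnRels n qq y) :
    qdet qq (fun i j => ∑ k, y i k ⊗ₜ[R] y k j) = qdet qq y ⊗ₜ[R] qdet qq y := by
  have hη := isQExterior_extOp (ι := Fin n) (((-qq)⁻¹ : Rˣ) : R)
  obtain ⟨θ, hθ⟩ := exists_functional_prod_map_extOp_eq_one (((-qq)⁻¹ : Rˣ) : R)
    (List.pairwise_lt_finRange n)
  refine tmul_right_cancel_of_functional (N := Module.End R (Finset (Fin n) →₀ R)) θ hθ ?_
  apply (Algebra.TensorProduct.assoc R R R B B (Module.End R (Finset (Fin n) →₀ R))).injective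
  rw [← hη.prod_sum_tmul, map_list_prod, List.map_map, Algebra.TensorProduct.assoc_tmul,
    ← hη.prod_sum_tmul, ← (hη.coaction hy).prod_sum_tmul]
  congr 2
  funext i
  simp only [Function.comp_apply, map_sum, TensorProduct.sum_tmul, TensorProduct.tmul_sum,
    Algebra.TensorProduct.assoc_tmul]
  exact Finset.sum_comm

end QuantumDeterminant

section Representatives

theorem exists_nat_sum_eq {κ X M : Type*} [Nonempty X] [AddCommMonoid M] (F : X → M)
    (t : Finset κ) (f : κ → X) :
    ∃ (s : Finset ℕ) (g : ℕ → X), ∑ j ∈ t, F (f j) = ∑ i ∈ s, F (g i) := by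
  refine ⟨Finset.range t.card, fun i => if hi : i < t.card then f (t.equivFin.symm ⟨i, hi⟩)
    else Classical.arbitrary X, ?_⟩
  rw [Finset.sum_range, ← Finset.sum_coe_sort, ← t.equivFin.symm.sum_comp]
  simp

variable {R M N P : Type*} [CommRing R] [AddCommGroup M] [Module R M] [AddCommGroup N] [Module R N]
  [AddCommGroup P] [Module R P]

theorem exists_nat_sum_tmul_eq (z : M ⊗[R] N) :
    ∃ (s : Finset ℕ) (z1 : ℕ → M) (z2 : ℕ → N), z = ∑ i ∈ s, z1 i ⊗ₜ[R] z2 i := by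
  obtain ⟨k, z1, z2, rfl⟩ := TensorProduct.exists_sum_tmul_eq z
  obtain ⟨s, g, h⟩ := exists_nat_sum_eq (fun p : M × N => p.1 ⊗ₜ[R] p.2) Finset.univ
    fun j => (z1 j, z2 j)
  exact ⟨s, fun i => (g i).1, fun i => (g i).2, h⟩

theorem exists_nat_sum_tmul_tmul_eq (z : M ⊗[R] (N ⊗[R] P)) :
    ∃ (s : Finset ℕ) (z1 : ℕ → M) (z2 : ℕ → N) (z3 : ℕ → P),
      z = ∑ i ∈ s, z1 i ⊗ₜ[R] (z2 i ⊗ₜ[R] z3 i) := by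
  obtain ⟨s, z1, w, rfl⟩ := exists_nat_sum_tmul_eq z
  choose t w1 w2 hw using fun i => exists_nat_sum_tmul_eq (w i)
  obtain ⟨r, g, h⟩ := exists_nat_sum_eq (fun p : M × N × P => p.1 ⊗ₜ[R] (p.2.1 ⊗ₜ[R] p.2.2))
    (s.sigma t) fun ij => (z1 ij.1, w1 ij.1 ij.2, w2 ij.1 ij.2)
  refine ⟨r, fun i => (g i).1, fun i => (g i).2.1, fun i => (g i).2.2, ?_⟩
  rw [← h, Finset.sum_sigma]
  refine Finset.sum_congr rfl fun i _ => ?_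
  conv_lhs => rw [hw i]
  rw [TensorProduct.tmul_sum]

end Representatives

section Coalgebra

variable {R C D ι : Type*} [CommRing R] [AddCommGroup C] [Module R C] [Coalgebra R C]
  [AddCommGroup D] [Module R D] [Coalgebra R D]

theorem nonempty_natRepr (c : C) : Nonempty (Coalgebra.Repr R c ℕ) := by
  obtain ⟨s, c1, c2, h⟩ := exists_nat_sum_tmul_eq (Coalgebra.comul (R := R) c)
  exact ⟨⟨s, c1, c2, h.symm⟩⟩

theorem sum_counit_right_smul {c : C} (r : Coalgebra.Repr R c ι) :
    ∑ i ∈ r.index, Coalgebra.counit (R := R) (r.right i) • r.left i = c := by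
  have := congrArg (TensorProduct.rid R C) (Coalgebra.sum_tmul_counit_eq r)
  simpa only [map_sum, TensorProduct.rid_tmul, one_smul] using this

/-- Evaluation at a group-like element, as a character of the convolution algebra. -/
def groupLikeEval {g : C} (hg : IsGroupLikeElem R g) : WithConv (C →ₗ[R] R) →ₐ[R] R :=
  AlgHom.ofLinearMap (LinearMap.applyₗ g ∘ₗ (WithConv.linearEquiv R (C →ₗ[R] R)).toLinearMap)
    (by simp [hg.counit_eq_one]) fun α β => by simp [hg.comul_eq_tmul_self]

/-- Precomposition with a coalgebra homomorphism, as a homomorphism of convolution algebras. -/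
def convPrecomp (f : C →ₗc[R] D) : WithConv (D →ₗ[R] R) →ₐ[R] WithConv (C →ₗ[R] R) :=
  AlgHom.ofLinearMap ((WithConv.linearEquiv R (C →ₗ[R] R)).symm.toLinearMap ∘ₗ
      LinearMap.lcomp R R f.toLinearMap ∘ₗ (WithConv.linearEquiv R (D →ₗ[R] R)).toLinearMap)
    (by ext; simp) fun α β =>
      WithConv.ofConv_injective (LinearMap.convMul_comp_coalgHom_distrib α β f)

/-- The entries of `x` span a matrix coalgebra: they transform under the comultiplication and the
counit like the coordinate functions on matrices. -/
structure IsMatrixCoalgebra (R : Type*) {C ι : Type*} [CommRing R] [AddCommGroup C] [Module R C]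
    [Coalgebra R C] [Fintype ι] [DecidableEq ι] (x : ι → ι → C) : Prop where
  comul : ∀ i j, Coalgebra.comul (R := R) (x i j) = ∑ k, x i k ⊗ₜ[R] x k j
  counit : ∀ i j, Coalgebra.counit (R := R) (x i j) = if i = j then 1 else 0

namespace IsMatrixCoalgebra

variable [Fintype ι] [DecidableEq ι] {x : ι → ι → C}

theorem map (hx : IsMatrixCoalgebra R x) (f : C →ₗc[R] D) :
    IsMatrixCoalgebra R fun i j => f (x i j) where
  comul i j := by simp [← CoalgHomClass.map_comp_comul_apply, hx.comul]
  counit i j := by simp [hx.counit]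

/-- Evaluation at a matrix coalgebra, as a matrix representation of the convolution algebra. -/
def eval (hx : IsMatrixCoalgebra R x) : WithConv (C →ₗ[R] R) →ₐ[R] Matrix ι ι R :=
  AlgHom.ofLinearMap
    { toFun := fun α => Matrix.of fun i j => α.ofConv (x i j)
      map_add' := fun α β => rfl
      map_smul' := fun c α => rfl }
    (Matrix.ext fun i j => by
      change (1 : WithConv (C →ₗ[R] R)).ofConv (x i j) = _
      simp [hx.counit, Matrix.one_apply])
    fun α β => Matrix.ext fun i j => by
      change (α * β).ofConv (x i j) = ∑ k, α.ofConv (x i k) * β.ofConv (x k j)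
      simp [hx.comul]

end IsMatrixCoalgebra

end Coalgebra

section UniversalAlgebras

variable {R : Type u} [CommRing R] {A C Q Q' : Type u} [Ring A] [Algebra R A] [Ring C] [Algebra R C]
  [Ring Q] [Algebra R Q] [Ring Q'] [Algebra R Q']

theorem subalgebra_eq_top_of_retraction {S : Subalgebra R A} (f : A →ₐ[R] S)
    (h : S.val.comp f = AlgHom.id R A) : S = ⊤ := by
  refine eq_top_iff.2 fun a _ => ?_
  have ha : (f a : A) = a := DFunLike.congr_fun h a
  exact ha ▸ (f a).2

/-- `π` is the universal homomorphism out of `A` sending `d` to `1`, among algebras in the same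
universe. -/
structure IsUniversalEqOne (π : A →ₐ[R] C) (d : A) : Prop where
  map_eq_one : π d = 1
  existsUnique : ∀ (B : Type u) [Ring B] [Algebra R B] (f : A →ₐ[R] B), f d = 1 →
    ∃! g : C →ₐ[R] B, ∀ a, g (π a) = f a

namespace IsUniversalEqOne

variable {π : A →ₐ[R] C} {d : A}

theorem surjective (hπ : IsUniversalEqOne π d) : Function.Surjective π := by
  obtain ⟨g, hg, -⟩ := hπ.existsUnique π.range π.rangeRestrict (Subtype.ext hπ.map_eq_one)
  exact AlgHom.range_eq_top π |>.1 <| subalgebra_eq_top_of_retraction g <|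
    (hπ.existsUnique C π hπ.map_eq_one).unique (fun a => congrArg Subtype.val (hg a)) fun _ => rfl

theorem ker_eq (hπ : IsUniversalEqOne π d) (hd : ∀ a, Commute d a) :
    RingHom.ker π = Ideal.span {d - 1} := by
  have : (Ideal.span {d - 1}).IsTwoSided := by
    refine ⟨fun {a} b ha => ?_⟩
    obtain ⟨c, rfl⟩ := Ideal.mem_span_singleton'.1 ha
    refine Ideal.mem_span_singleton'.2 ⟨c * b, ?_⟩
    rw [mul_assoc, mul_assoc, ((hd b).sub_left (Commute.one_left b)).eq]
  refine le_antisymm (fun a ha => ?_) ?_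
  · obtain ⟨g, hg, -⟩ := hπ.existsUnique (A ⧸ Ideal.span {d - 1})
      (Ideal.Quotient.mkₐ R (Ideal.span {d - 1}))
      (Ideal.Quotient.eq.2 (Ideal.mem_span_singleton_self _))
    exact Ideal.Quotient.eq_zero_iff_mem.1 <| (hg a).symm.trans <| by
      rw [(RingHom.mem_ker).1 ha, map_zero]
  · simp [Ideal.span_le, Set.singleton_subset_iff, RingHom.mem_ker, hπ.map_eq_one]

end IsUniversalEqOne

theorem exists_ringQuot_eq_one_algEquiv {π : A →ₐ[R] C} {d : A} (hsurj : Function.Surjective π)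
    (hker : RingHom.ker π = Ideal.span {d - 1}) :
    ∃ e : RingQuot (fun a b : A => a = d ∧ b = 1) ≃ₐ[R] C,
      ∀ a, e (RingQuot.mkAlgHom R _ a) = π a := by
  have hd : d - 1 ∈ RingHom.ker π := hker ▸ Ideal.mem_span_singleton_self _
  have hrel : ∀ ⦃a b : A⦄, a = d ∧ b = 1 → π a = π b := by
    rintro _ _ ⟨rfl, rfl⟩
    rwa [RingHom.mem_ker, map_sub, sub_eq_zero] at hd
  have hmk : RingQuot.mkAlgHom R (fun a b : A => a = d ∧ b = 1) d = 1 :=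
    (RingQuot.mkAlgHom_rel R ⟨rfl, rfl⟩).trans (map_one _)
  have hlift (a : A) : RingQuot.liftAlgHom R ⟨π, hrel⟩ (RingQuot.mkAlgHom R _ a) = π a :=
    RingQuot.liftAlgHom_mkAlgHom_apply R π hrel a
  refine ⟨AlgEquiv.ofBijective (RingQuot.liftAlgHom R ⟨π, hrel⟩) ⟨?_, fun c => ?_⟩, hlift⟩
  · refine (injective_iff_map_eq_zero _).2 fun z hz => ?_
    obtain ⟨a, rfl⟩ := RingQuot.mkAlgHom_surjective R _ z
    rw [hlift, ← RingHom.mem_ker, hker] at hz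
    obtain ⟨c, rfl⟩ := Ideal.mem_span_singleton'.1 hz
    rw [map_mul, map_sub, hmk, map_one, sub_self, mul_zero]
  · obtain ⟨a, rfl⟩ := hsurj c
    exact ⟨_, hlift a⟩

/-- `f : A → Q` adjoins a central inverse `t` of `d`, universally among algebras in the same
universe. -/
structure IsAdjoinCentralInverse (f : A →ₐ[R] Q) (d : A) (t : Q) : Prop where
  commute : ∀ a, Commute (f a) t
  mul_eq_one : f d * t = 1
  existsUnique : ∀ (C : Type u) [Ring C] [Algebra R C] (g : A →ₐ[R] C) (s : C),
    (∀ a, Commute (g a) s) → g d * s = 1 → ∃! h : Q →ₐ[R] C, (∀ a, h (f a) = g a) ∧ h t = s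

/-- `f : A → Q` is the localization of `A` at the powers of `d`, with `t` as the inverse of `d`:
every element of `Q` is a fraction and the kernel of `f` is the `d`-power torsion. -/
structure IsCentralLocalization (f : A →ₐ[R] Q) (d : A) (t : Q) : Prop where
  commute : ∀ a, Commute (f a) t
  mul_eq_one : f d * t = 1
  exists_eq : ∀ z, ∃ a k, z = f a * t ^ k
  exists_pow_mul_eq_zero : ∀ a, f a = 0 → ∃ k : ℕ, d ^ k * a = 0

theorem map_pow_mul_pow_eq_one {f : A →ₐ[R] Q} {d : A} {t : Q} (hcomm : ∀ a, Commute (f a) t)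
    (hdt : f d * t = 1) (k : ℕ) : f d ^ k * t ^ k = 1 := by
  rw [← (hcomm d).mul_pow, hdt, one_pow]

/-- The fractions `f a * t ^ k`, for a central inverse `t` of `f d`. -/
def fractionSubalgebra (f : A →ₐ[R] Q) (d : A) (t : Q) (hcomm : ∀ a, Commute (f a) t)
    (hdt : f d * t = 1) : Subalgebra R Q where
  carrier := {z | ∃ a k, z = f a * t ^ k}
  mul_mem' := by
    rintro _ _ ⟨a, k, rfl⟩ ⟨b, l, rfl⟩
    refine ⟨a * b, k + l, ?_⟩
    rw [map_mul, pow_add, mul_assoc, ← mul_assoc (t ^ k), ← ((hcomm b).pow_right k).eq]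
    simp only [mul_assoc]
  add_mem' := by
    rintro _ _ ⟨a, k, rfl⟩ ⟨b, l, rfl⟩
    have hpow := map_pow_mul_pow_eq_one hcomm hdt
    refine ⟨a * d ^ l + b * d ^ k, k + l, ?_⟩
    rw [map_add, add_mul, map_mul, map_mul, map_pow, map_pow]
    congr 1
    · rw [add_comm, pow_add, mul_assoc, ← mul_assoc (f d ^ l), hpow, one_mul]
    · rw [pow_add, mul_assoc, ← mul_assoc (f d ^ k), hpow, one_mul]
  algebraMap_mem' r := ⟨algebraMap R A r, 0, by simp⟩

theorem exists_central_inverse_of_commute {d : A} (hd : ∀ a, Commute d a) :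
    ∃ (L : Type u) (_ : Ring L) (_ : Algebra R L) (f : A →ₐ[R] L) (t : L),
      (∀ a, Commute (f a) t) ∧ f d * t = 1 ∧ ∀ a, f a = 0 → ∃ k : ℕ, d ^ k * a = 0 := by
  have hS : ∀ (s : Submonoid.powers d) (a : A), (s : A) * a = a * s := by
    rintro ⟨_, k, rfl⟩ a
    exact ((hd a).pow_left k).eq
  let _ : OreLocalization.OreSet (Submonoid.powers d) :=
    { ore_right_cancel := fun a b s h => ⟨s, by rw [hS, hS, h]⟩
      oreNum := fun a _ => a
      oreDenom := fun _ s => s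
      ore_eq := fun a s => hS s a }
  let L := OreLocalization (Submonoid.powers d) A
  let f : A →ₐ[R] L :=
    { (OreLocalization.numeratorRingHom : A →+* L) with commutes' := fun r => rfl }
  obtain ⟨u, hu⟩ : IsUnit (f d) :=
    OreLocalization.numerator_isUnit (⟨d, Submonoid.mem_powers d⟩ : Submonoid.powers d)
  refine ⟨L, inferInstance, inferInstance, f, (u⁻¹ : Lˣ), fun a => ?_, ?_, fun a ha => ?_⟩
  · exact Commute.units_inv_right (hu ▸ ((hd a).map f).symm)
  · rw [← hu, Units.mul_inv]
  · rw [← map_zero f] at ha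
    obtain ⟨s, v, hs, hv⟩ := OreLocalization.oreDiv_eq_iff.1 ha
    obtain ⟨k, hk⟩ : ∃ k : ℕ, d ^ k = (s : A) := s.2
    have hsv : (s : A) = v := by simpa using hv
    exact ⟨k, by simpa [hk, hsv] using hs.symm⟩

theorem IsAdjoinCentralInverse.isCentralLocalization {f : A →ₐ[R] Q} {d : A} {t : Q}
    (h : IsAdjoinCentralInverse f d t) (hd : ∀ a, Commute d a) : IsCentralLocalization f d t where
  commute := h.commute
  mul_eq_one := h.mul_eq_one
  exists_eq z := by
    let S := fractionSubalgebra f d t h.commute h.mul_eq_one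
    let f' : A →ₐ[R] S := f.codRestrict S fun a => ⟨a, 0, by simp⟩
    obtain ⟨g, ⟨hgf, hgt⟩, -⟩ := h.existsUnique S f' ⟨t, 1, 1, by simp⟩
      (fun a => Subtype.ext (h.commute a)) (Subtype.ext h.mul_eq_one)
    have hS : S = ⊤ := subalgebra_eq_top_of_retraction g <|
      (h.existsUnique Q f t h.commute h.mul_eq_one).unique
        ⟨fun a => congrArg Subtype.val (hgf a), congrArg Subtype.val hgt⟩ ⟨fun _ => rfl, rfl⟩
    exact (hS ▸ Algebra.mem_top : z ∈ S)
  exists_pow_mul_eq_zero a ha := by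
    obtain ⟨L, _, _, num, s, hcomm, hds, hker⟩ := exists_central_inverse_of_commute (R := R) hd
    obtain ⟨g, ⟨hgf, -⟩, -⟩ := h.existsUnique L num s hcomm hds
    exact hker a (by rw [← hgf, ha, map_zero])

namespace IsCentralLocalization

variable {f : A →ₐ[R] Q} {d : A} {t : Q}

theorem eq_zero_of_mul_pow_eq_zero (h : IsCentralLocalization f d t) {a : A} {k : ℕ}
    (ha : f a * t ^ k = 0) : f a = 0 := by
  rw [← one_mul (f a), ← map_pow_mul_pow_eq_one h.commute h.mul_eq_one k, mul_assoc,
    ← (Commute.pow_right (h.commute a) k).eq, ha, mul_zero]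

theorem map_eq_zero_of_pow_mul_eq_zero (h : IsCentralLocalization f d t) {a : A} {k : ℕ}
    (ha : d ^ k * a = 0) : f a = 0 := by
  have htd : t ^ k * f d ^ k = 1 := by
    rw [← (h.commute d).symm.mul_pow, ← (h.commute d).eq, h.mul_eq_one, one_pow]
  rw [← one_mul (f a), ← htd, mul_assoc, ← map_pow, ← map_mul, ha, map_zero, mul_zero]

theorem algHom_ext (h : IsCentralLocalization f d t) {F G : Q →ₐ[R] C}
    (hFG : ∀ a, F (f a) = G (f a)) : F = G := by
  have ht : F t = G t := left_inv_eq_right_inv (a := F (f d))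
    (by rw [← map_mul, ← (h.commute d).eq, h.mul_eq_one, map_one])
    (by rw [hFG, ← map_mul, h.mul_eq_one, map_one])
  ext z
  obtain ⟨a, k, rfl⟩ := h.exists_eq z
  rw [map_mul, map_mul, map_pow, map_pow, ht, hFG]

theorem bijective (h : IsCentralLocalization f d t) {f' : A →ₐ[R] Q'} {t' : Q'}
    (h' : IsCentralLocalization f' d t') {F : Q →ₐ[R] Q'} (hF : ∀ a, F (f a) = f' a)
    (hFt : F t = t') : Function.Bijective F := by
  have hfrac (a : A) (k : ℕ) : F (f a * t ^ k) = f' a * t' ^ k := by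
    rw [map_mul, map_pow, hF, hFt]
  refine ⟨(injective_iff_map_eq_zero F).2 fun z hz => ?_, fun z => ?_⟩
  · obtain ⟨a, k, rfl⟩ := h.exists_eq z
    obtain ⟨m, hm⟩ := h'.exists_pow_mul_eq_zero a <|
      h'.eq_zero_of_mul_pow_eq_zero ((hfrac a k).symm.trans hz)
    rw [h.map_eq_zero_of_pow_mul_eq_zero hm, zero_mul]
  · obtain ⟨a, k, rfl⟩ := h'.exists_eq z
    exact ⟨_, hfrac a k⟩

end IsCentralLocalization

theorem IsAdjoinCentralInverse.exists_algEquiv {f : A →ₐ[R] Q} {d : A} {t : Q}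
    (h : IsAdjoinCentralInverse f d t) (hd : ∀ a, Commute d a) {f' : A →ₐ[R] Q'} {t' : Q'}
    (h' : IsCentralLocalization f' d t') :
    ∃ e : Q ≃ₐ[R] Q', (∀ a, e (f a) = f' a) ∧ e t = t' := by
  obtain ⟨F, ⟨hF, hFt⟩, -⟩ := h.existsUnique Q' f' t' h'.commute h'.mul_eq_one
  exact ⟨AlgEquiv.ofBijective F ((h.isCentralLocalization hd).bijective h' hF hFt), hF, hFt⟩

end UniversalAlgebras

section DualQuasitriangular

variable {R : Type u} [CommRing R] {A A' : Type u} [Ring A] [Bialgebra R A] [Ring A']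
  [Bialgebra R A'] {ρ ρt : A →ₗ[R] A →ₗ[R] R} {ρ' ρt' : A' →ₗ[R] A' →ₗ[R] R}

namespace IsDQT

/-- A dual quasitriangular structure `ρ` as the algebra homomorphism `a ↦ ρ(a, ·)`. -/
def leftHom (hρ : IsDQT ρ) : A →ₐ[R] WithConv (A →ₗ[R] R) :=
  AlgHom.ofLinearMap ((WithConv.linearEquiv R (A →ₗ[R] R)).symm.toLinearMap ∘ₗ ρ)
    (WithConv.ofConv_injective (LinearMap.ext fun c => by simp [hρ.2.2.2.1]))
    fun a b => WithConv.ofConv_injective <| LinearMap.ext fun c => by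
      obtain ⟨r⟩ := nonempty_natRepr (R := R) c
      simpa [r.convMul_apply] using hρ.1 a b c r.index r.left r.right r.eq.symm

/-- A dual quasitriangular structure `ρ` as the algebra antihomomorphism `a ↦ ρ(·, a)`. -/
def rightHom (hρ : IsDQT ρ) : A →ₐ[R] (WithConv (A →ₗ[R] R))ᵐᵒᵖ :=
  AlgHom.ofLinearMap ((MulOpposite.opLinearEquiv R).toLinearMap ∘ₗ
      (WithConv.linearEquiv R (A →ₗ[R] R)).symm.toLinearMap ∘ₗ ρ.flip)
    (MulOpposite.unop_injective <| WithConv.ofConv_injective <|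
      LinearMap.ext fun c => by simp [hρ.2.2.1])
    fun a b => MulOpposite.unop_injective <| WithConv.ofConv_injective <| LinearMap.ext fun c => by
      obtain ⟨r⟩ := nonempty_natRepr (R := R) c
      simpa [r.convMul_apply] using hρ.2.1 c a b r.index r.left r.right r.eq.symm

/-- Pairing with a group-like element in the first argument, as a character. -/
def leftCharacter (hρ : IsDQT ρ) {g : A} (hg : IsGroupLikeElem R g) : A →ₐ[R] R :=
  ((AlgEquiv.toOpposite R R).symm.toAlgHom.comp (AlgHom.op (groupLikeEval hg))).comp hρ.rightHom

/-- Pairing with a group-like element in the second argument, as a character. -/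
def rightCharacter (hρ : IsDQT ρ) {g : A} (hg : IsGroupLikeElem R g) : A →ₐ[R] R :=
  (groupLikeEval hg).comp hρ.leftHom

section MatrixCoalgebra

variable {ι : Type*} [Fintype ι] [DecidableEq ι] {x : ι → ι → A}

/-- The matrix representation of `A` with matrix entries `a ↦ ρ(a, x^k_l)`. -/
def leftMatrixRep (hρ : IsDQT ρ) (hx : IsMatrixCoalgebra R x) : A →ₐ[R] Matrix ι ι R :=
  hx.eval.comp hρ.leftHom

/-- The matrix representation of `A` with matrix entries `a ↦ ρ(x^l_k, a)`; the transposition turns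
the antihomomorphism `a ↦ ρ(·, a)` into a homomorphism. -/
def rightMatrixRep (hρ : IsDQT ρ) (hx : IsMatrixCoalgebra R x) : A →ₐ[R] Matrix ι ι R :=
  ((Matrix.transposeAlgEquiv ι R R).symm.toAlgHom.comp (AlgHom.op hx.eval)).comp hρ.rightHom

theorem leftMatrixRep_apply (hρ : IsDQT ρ) (hx : IsMatrixCoalgebra R x) (a : A) (k l : ι) :
    hρ.leftMatrixRep hx a k l = ρ a (x k l) :=
  rfl

theorem rightMatrixRep_apply (hρ : IsDQT ρ) (hx : IsMatrixCoalgebra R x) (a : A) (k l : ι) :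
    hρ.rightMatrixRep hx a k l = ρ (x l k) a :=
  rfl

theorem map_eq (hρ : IsDQT ρ) (hρ' : IsDQT ρ') (hx : IsMatrixCoalgebra R x)
    (htop : Algebra.adjoin R (Set.range x.uncurry) = ⊤) (f : A →ₐc[R] A')
    (hf : ∀ i j k l, ρ' (f (x i j)) (f (x k l)) = ρ (x i j) (x k l)) (a b : A) :
    ρ' (f a) (f b) = ρ a b := by
  have hleft : (hρ'.leftMatrixRep (hx.map (f : A →ₗc[R] A'))).comp (f : A →ₐ[R] A') =
      hρ.leftMatrixRep hx := by
    refine AlgHom.ext_of_adjoin_eq_top htop ?_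
    rintro _ ⟨⟨i, j⟩, rfl⟩
    ext k l
    exact hf i j k l
  have hright : ((AlgHom.op (convPrecomp (f : A →ₗc[R] A'))).comp hρ'.rightHom).comp
      (f : A →ₐ[R] A') = hρ.rightHom := by
    refine AlgHom.ext_of_adjoin_eq_top htop ?_
    rintro _ ⟨⟨k, l⟩, rfl⟩
    refine MulOpposite.unop_injective <| WithConv.ofConv_injective <| LinearMap.ext fun a => ?_
    exact congrFun (congrFun (DFunLike.congr_fun hleft a) k) l
  exact congrArg (fun F : (WithConv (A →ₗ[R] R))ᵐᵒᵖ => F.unop.ofConv a)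
    (DFunLike.congr_fun hright b)

end MatrixCoalgebra

end IsDQT

/-- A bilinear form on `A` as a map from `A` to the opposite of the dual algebra of `A`. The
convolution product of such maps is the one of `Hom(A ⊗ A^cop, R)`. -/
def toCopConv (α : A →ₗ[R] A →ₗ[R] R) : WithConv (A →ₗ[R] (WithConv (A →ₗ[R] R))ᵐᵒᵖ) :=
  WithConv.toConv ((MulOpposite.opLinearEquiv R).toLinearMap ∘ₗ
    (WithConv.linearEquiv R (A →ₗ[R] R)).symm.toLinearMap ∘ₗ α)

theorem toCopConv_injective : Function.Injective (toCopConv (R := R) (A := A)) := by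
  intro α β h
  ext a b
  exact congrArg (fun F : WithConv (A →ₗ[R] (WithConv (A →ₗ[R] R))ᵐᵒᵖ) =>
    (F.ofConv a).unop.ofConv b) h

theorem toCopConv_mul_apply (α β : A →ₗ[R] A →ₗ[R] R) {a b : A} {ι κ : Type*}
    (r : Coalgebra.Repr R a ι) (s : Coalgebra.Repr R b κ) :
    ((toCopConv α * toCopConv β).ofConv a).unop.ofConv b =
      ∑ i ∈ r.index, ∑ j ∈ s.index,
        α (r.left i) (s.right j) * β (r.right i) (s.left j) := by
  let evalAt : (WithConv (A →ₗ[R] R))ᵐᵒᵖ →ₗ[R] R := LinearMap.applyₗ b ∘ₗ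
    (WithConv.linearEquiv R (A →ₗ[R] R)).toLinearMap ∘ₗ
      (MulOpposite.opLinearEquiv R).symm.toLinearMap
  change evalAt _ = _
  rw [r.convMul_apply, map_sum]
  refine Finset.sum_congr rfl fun i _ => (s.convMul_apply _ _).trans ?_
  exact Finset.sum_congr rfl fun j _ => mul_comm _ _

theorem toCopConv_mul_eq_one {α β : A →ₗ[R] A →ₗ[R] R}
    (h : ∀ (a b : A) (r : Coalgebra.Repr R a ℕ) (s : Coalgebra.Repr R b ℕ),
      ∑ i ∈ r.index, ∑ j ∈ s.index, α (r.left i) (s.right j) * β (r.right i) (s.left j) =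
        Coalgebra.counit (R := R) a * Coalgebra.counit (R := R) b) :
    toCopConv α * toCopConv β = 1 := by
  refine WithConv.ofConv_injective <| LinearMap.ext fun a => MulOpposite.unop_injective <|
    WithConv.ofConv_injective <| LinearMap.ext fun b => ?_
  obtain ⟨r⟩ := nonempty_natRepr (R := R) a
  obtain ⟨s⟩ := nonempty_natRepr (R := R) b
  rw [toCopConv_mul_apply α β r s, h a b r s]
  simp [LinearMap.convOne_def, Algebra.algebraMap_eq_smul_one]

namespace IsCopConvInv

theorem unique {ρt₁ ρt₂ : A →ₗ[R] A →ₗ[R] R} (h₁ : IsCopConvInv ρ ρt₁)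
    (h₂ : IsCopConvInv ρ ρt₂) : ρt₁ = ρt₂ := by
  refine toCopConv_injective (left_inv_eq_right_inv (a := toCopConv ρ) ?_ ?_)
  · exact toCopConv_mul_eq_one fun a b r s => (h₁ a b _ _ _ _ _ _ r.eq.symm s.eq.symm).1
  · exact toCopConv_mul_eq_one fun a b r s => (h₂ a b _ _ _ _ _ _ r.eq.symm s.eq.symm).2

theorem map_eq (h : IsCopConvInv ρ ρt) (h' : IsCopConvInv ρ' ρt') (f : A →ₐc[R] A')
    (hf : ∀ a b, ρ' (f a) (f b) = ρ a b) (a b : A) : ρt' (f a) (f b) = ρt a b := by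
  have hpull : IsCopConvInv ρ (ρt'.compl₁₂ (f : A →ₗ[R] A') (f : A →ₗ[R] A')) := by
    intro a b s t a1 a2 b1 b2 ha hb
    have := h' (f a) (f b) s t (fun i => f (a1 i)) (fun i => f (a2 i)) (fun j => f (b1 j))
      (fun j => f (b2 j)) (by simp [← CoalgHomClass.map_comp_comul_apply, ha])
      (by simp [← CoalgHomClass.map_comp_comul_apply, hb])
    simpa [hf] using this
  exact (LinearMap.congr_fun₂ (h.unique hpull) a b).symm

end IsCopConvInv

theorem comul2_map (f : A →ₐc[R] A') (a : A) :
    comul2 (R := R) (f a) = TensorProduct.map (f : A →ₗ[R] A')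
      (TensorProduct.map (f : A →ₗ[R] A') (f : A →ₗ[R] A')) (comul2 (R := R) a) := by
  obtain ⟨r⟩ := nonempty_natRepr (R := R) a
  simp [comul2, ← CoalgHomClass.map_comp_comul_apply, ← r.eq]

theorem CovChar.map_eq {cmul : A → A → A} {cmul' : A' → A' → A'} (hc : CovChar ρ ρt cmul)
    (hc' : CovChar ρ' ρt' cmul') (f : A →ₐc[R] A') (hf : ∀ a b, ρ' (f a) (f b) = ρ a b)
    (hft : ∀ a b, ρt' (f a) (f b) = ρt a b) (a b : A) : f (cmul a b) = cmul' (f a) (f b) := by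
  obtain ⟨s, a1, a2, a3, ha⟩ := exists_nat_sum_tmul_tmul_eq (comul2 (R := R) a)
  obtain ⟨t, b1, b2, b3, hb⟩ := exists_nat_sum_tmul_tmul_eq (comul2 (R := R) b)
  rw [hc a b s t a1 a2 a3 b1 b2 b3 ha hb,
    hc' (f a) (f b) s t (fun i => f (a1 i)) (fun i => f (a2 i)) (fun i => f (a3 i))
      (fun i => f (b1 i)) (fun i => f (b2 i)) (fun i => f (b3 i))
      (by simp [comul2_map, ha]) (by simp [comul2_map, hb])]
  simp [hf, hft]

/-- A group-like element of a dual quasitriangular bialgebra that pairs with everything through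
the counit. Covariantization does not alter products with such an element. -/
structure IsTransparent (ρ : A →ₗ[R] A →ₗ[R] R) (g : A) : Prop extends IsGroupLikeElem R g where
  left : ρ g = Coalgebra.counit
  right : ρ.flip g = Coalgebra.counit

theorem sum_counit_mul_counit_smul_right {a : A} {s : Finset ℕ} {a1 a2 a3 : ℕ → A}
    (h : comul2 (R := R) a = ∑ i ∈ s, a1 i ⊗ₜ[R] (a2 i ⊗ₜ[R] a3 i)) :
    ∑ i ∈ s, (Coalgebra.counit (R := R) (a1 i) * Coalgebra.counit (R := R) (a2 i)) • a3 i = a := by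
  obtain ⟨r⟩ := nonempty_natRepr (R := R) a
  have hcounit (b : A) : TensorProduct.lid R A
      (TensorProduct.map Coalgebra.counit LinearMap.id (Coalgebra.comul (R := R) b)) = b := by
    simpa [LinearMap.rTensor] using
      congrArg (TensorProduct.lid R A) (Coalgebra.rTensor_counit_comul (R := R) b)
  have := congrArg (TensorProduct.lid R A ∘ TensorProduct.map (Coalgebra.counit (R := R))
    ((TensorProduct.lid R A).toLinearMap ∘ₗ
      TensorProduct.map (Coalgebra.counit (R := R)) LinearMap.id)) h
  simpa [comul2, ← r.eq, hcounit, Coalgebra.sum_counit_smul, smul_smul, mul_comm, eq_comm]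
    using this

theorem sum_counit_mul_counit_smul_middle {a : A} {s : Finset ℕ} {a1 a2 a3 : ℕ → A}
    (h : comul2 (R := R) a = ∑ i ∈ s, a1 i ⊗ₜ[R] (a2 i ⊗ₜ[R] a3 i)) :
    ∑ i ∈ s, (Coalgebra.counit (R := R) (a1 i) * Coalgebra.counit (R := R) (a3 i)) • a2 i = a := by
  obtain ⟨r⟩ := nonempty_natRepr (R := R) a
  have hcounit (b : A) : TensorProduct.rid R A
      (TensorProduct.map LinearMap.id Coalgebra.counit (Coalgebra.comul (R := R) b)) = b := by
    simpa [LinearMap.lTensor] using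
      congrArg (TensorProduct.rid R A) (Coalgebra.lTensor_counit_comul (R := R) b)
  have := congrArg (TensorProduct.lid R A ∘ TensorProduct.map (Coalgebra.counit (R := R))
    ((TensorProduct.rid R A).toLinearMap ∘ₗ
      TensorProduct.map LinearMap.id (Coalgebra.counit (R := R)))) h
  simpa [comul2, ← r.eq, hcounit, Coalgebra.sum_counit_smul, smul_smul, mul_comm, eq_comm]
    using this

namespace IsTransparent

variable {g : A}

theorem comul_eq_sum (hg : IsTransparent ρ g) :
    Coalgebra.comul (R := R) g = ∑ _i ∈ {(0 : ℕ)}, g ⊗ₜ[R] g := by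
  simp [hg.comul_eq_tmul_self]

theorem comul2_eq_sum (hg : IsTransparent ρ g) :
    comul2 (R := R) g = ∑ _i ∈ {(0 : ℕ)}, g ⊗ₜ[R] (g ⊗ₜ[R] g) := by
  simp [comul2, hg.comul_eq_tmul_self]

theorem right_apply (hg : IsTransparent ρ g) (a : A) : ρ a g = Coalgebra.counit (R := R) a :=
  LinearMap.congr_fun hg.right a

theorem commute (hg : IsTransparent ρ g) (hρ : IsDQT ρ) (a : A) : Commute g a := by
  obtain ⟨r⟩ := nonempty_natRepr (R := R) a
  have h := hρ.2.2.2.2 g a {0} r.index _ _ r.left r.right hg.comul_eq_sum r.eq.symm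
  simp only [Finset.sum_singleton, hg.left] at h
  calc g * a = ∑ j ∈ r.index, Coalgebra.counit (R := R) (r.left j) • (g * r.right j) := by
        simp only [← mul_smul_comm, ← Finset.mul_sum, Coalgebra.sum_counit_smul]
    _ = ∑ j ∈ r.index, Coalgebra.counit (R := R) (r.right j) • (r.left j * g) := h.symm
    _ = a * g := by simp only [← smul_mul_assoc, ← Finset.sum_mul, sum_counit_right_smul]

theorem inv_left (hg : IsTransparent ρ g) (h : IsCopConvInv ρ ρt) (a : A) :
    ρt g a = Coalgebra.counit (R := R) a := by
  obtain ⟨r⟩ := nonempty_natRepr (R := R) a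
  have := (h g a {0} r.index _ _ r.left r.right hg.comul_eq_sum r.eq.symm).1
  simp only [Finset.sum_singleton, hg.left, hg.counit_eq_one, one_mul, mul_comm (ρt g _)] at this
  simpa only [← smul_eq_mul, ← map_smul, ← map_sum, Coalgebra.sum_counit_smul] using this

theorem inv_right (hg : IsTransparent ρ g) (h : IsCopConvInv ρ ρt) (a : A) :
    ρt a g = Coalgebra.counit (R := R) a := by
  obtain ⟨r⟩ := nonempty_natRepr (R := R) a
  have := (h a g r.index {0} r.left r.right _ _ r.eq.symm hg.comul_eq_sum).1
  simp only [Finset.sum_singleton, hg.right_apply, hg.counit_eq_one, mul_one,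
    mul_comm (ρt _ g)] at this
  simpa only [← smul_eq_mul, ← LinearMap.map_smul₂, ← LinearMap.map_sum₂,
    sum_counit_right_smul] using this

theorem cmul_left (hg : IsTransparent ρ g) (h : IsCopConvInv ρ ρt) {cmul : A → A → A}
    (hc : CovChar ρ ρt cmul) (a : A) : cmul g a = g * a := by
  obtain ⟨t, b1, b2, b3, hb⟩ := exists_nat_sum_tmul_tmul_eq (comul2 (R := R) a)
  rw [hc g a {0} t _ _ _ b1 b2 b3 hg.comul2_eq_sum hb]
  simp only [Finset.sum_singleton, hg.left, hg.inv_left h, ← mul_smul_comm, ← Finset.mul_sum,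
    sum_counit_mul_counit_smul_right hb]

theorem cmul_right (hg : IsTransparent ρ g) (h : IsCopConvInv ρ ρt) {cmul : A → A → A}
    (hc : CovChar ρ ρt cmul) (a : A) : cmul a g = a * g := by
  obtain ⟨t, b1, b2, b3, hb⟩ := exists_nat_sum_tmul_tmul_eq (comul2 (R := R) a)
  rw [hc a g t {0} b1 b2 b3 _ _ _ hb hg.comul2_eq_sum]
  simp only [Finset.sum_singleton, hg.right_apply, hg.inv_right h, ← smul_mul_assoc,
    ← Finset.sum_mul, mul_comm (Coalgebra.counit (R := R) (b3 _)),
    sum_counit_mul_counit_smul_middle hb]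

theorem map (hg : IsTransparent ρ g) (hρ' : IsDQT ρ') {f : A →ₐc[R] A'}
    (hf : ∀ a b, ρ' (f a) (f b) = ρ a b)
    (hext : ∀ χ χ' : A' →ₐ[R] R, (∀ a, χ (f a) = χ' (f a)) → χ = χ') :
    IsTransparent ρ' (f g) := by
  have hfg : IsGroupLikeElem R (f g) := hg.toIsGroupLikeElem.map f
  refine { hfg with left := ?_, right := ?_ }
  · have hχ : hρ'.leftCharacter hfg = Bialgebra.counitAlgHom R A' :=
      hext _ _ fun a => (hf g a).trans (by simp [hg.left])
    exact congrArg AlgHom.toLinearMap hχ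
  · have hχ : hρ'.rightCharacter hfg = Bialgebra.counitAlgHom R A' :=
      hext _ _ fun a => (hf a g).trans (by simp [hg.right_apply])
    exact congrArg AlgHom.toLinearMap hχ

theorem of_mul_eq_one {t : A} (hg : IsTransparent ρ g) (hρ : IsDQT ρ) (hgt : g * t = 1)
    (htg : t * g = 1) : IsTransparent ρ t := by
  have hleft : hρ.leftHom g = 1 := by
    rw [LinearMap.convOne_def]
    exact congrArg WithConv.toConv hg.left
  have hright : hρ.rightHom g = 1 := by
    refine MulOpposite.unop_injective ?_
    rw [MulOpposite.unop_one, LinearMap.convOne_def]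
    exact congrArg WithConv.toConv hg.right
  refine { IsGroupLikeElem.of_mul_eq_one hgt htg hg.toIsGroupLikeElem with left := ?_, right := ?_ }
  · have ht : hρ.leftHom t = 1 := by simpa [hleft] using congrArg hρ.leftHom htg
    exact congrArg WithConv.ofConv (ht.trans LinearMap.convOne_def)
  · have ht : hρ.rightHom t = 1 := by simpa [hright] using congrArg hρ.rightHom htg
    exact congrArg WithConv.ofConv ((congrArg MulOpposite.unop ht).trans LinearMap.convOne_def)

end IsTransparent

/-- The algebra `B` is a covariantization of the dual quasitriangular bialgebra `A`: the linear
equivalence `φ` identifies its product with the covariantized product `cmul` on `A`. -/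
structure IsCovariantization (ρ ρt : A →ₗ[R] A →ₗ[R] R) (cmul : A → A → A) {B : Type u} [Ring B]
    [Algebra R B] (φ : B ≃ₗ[R] A) : Prop where
  isDQT : IsDQT ρ
  isCopConvInv : IsCopConvInv ρ ρt
  covChar : CovChar ρ ρt cmul
  map_one : φ 1 = 1
  map_mul : ∀ a b, φ (a * b) = cmul (φ a) (φ b)

namespace IsCovariantization

variable {cmul : A → A → A} {cmul' : A' → A' → A'} {B B' : Type u} [Ring B] [Algebra R B]
  [Ring B'] [Algebra R B'] {φ : B ≃ₗ[R] A} {φ' : B' ≃ₗ[R] A'}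

section Transparent

variable {g : A}

theorem map_symm_mul (h : IsCovariantization ρ ρt cmul φ) (hg : IsTransparent ρ g) (b : B) :
    φ (φ.symm g * b) = g * φ b := by
  rw [h.map_mul, φ.apply_symm_apply, hg.cmul_left h.isCopConvInv h.covChar]

theorem map_mul_symm (h : IsCovariantization ρ ρt cmul φ) (hg : IsTransparent ρ g) (b : B) :
    φ (b * φ.symm g) = φ b * g := by
  rw [h.map_mul, φ.apply_symm_apply, hg.cmul_right h.isCopConvInv h.covChar]

theorem map_symm_pow_mul (h : IsCovariantization ρ ρt cmul φ) (hg : IsTransparent ρ g) (k : ℕ)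
    (b : B) : φ (φ.symm g ^ k * b) = g ^ k * φ b := by
  induction k generalizing b with
  | zero => simp
  | succ k ih => rw [pow_succ, mul_assoc, ih, h.map_symm_mul hg, pow_succ, mul_assoc]

theorem map_mul_symm_pow (h : IsCovariantization ρ ρt cmul φ) (hg : IsTransparent ρ g) (k : ℕ)
    (b : B) : φ (b * φ.symm g ^ k) = φ b * g ^ k := by
  induction k generalizing b with
  | zero => simp
  | succ k ih => rw [pow_succ', ← mul_assoc, ih, h.map_mul_symm hg, pow_succ', mul_assoc]

theorem commute (h : IsCovariantization ρ ρt cmul φ) (hg : IsTransparent ρ g) (b : B) :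
    Commute (φ.symm g) b :=
  φ.injective <| by rw [h.map_symm_mul hg, h.map_mul_symm hg, hg.commute h.isDQT]

end Transparent

/-- A homomorphism of dual quasitriangular bialgebras, as a homomorphism of covariantizations. -/
def mapAlgHom (h : IsCovariantization ρ ρt cmul φ) (h' : IsCovariantization ρ' ρt' cmul' φ')
    (f : A →ₐc[R] A') (hf : ∀ a b, ρ' (f a) (f b) = ρ a b) : B →ₐ[R] B' :=
  AlgHom.ofLinearMap (φ'.symm.toLinearMap ∘ₗ (f : A →ₗ[R] A') ∘ₗ φ.toLinearMap)
    (φ'.injective <| by simp [h.map_one, h'.map_one])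
    fun a b => φ'.injective <| by
      simpa [h.map_mul, h'.map_mul] using h.covChar.map_eq h'.covChar f hf
        (h.isCopConvInv.map_eq h'.isCopConvInv f hf) (φ a) (φ b)

theorem apply_mapAlgHom (h : IsCovariantization ρ ρt cmul φ)
    (h' : IsCovariantization ρ' ρt' cmul' φ') {f : A →ₐc[R] A'}
    (hf : ∀ a b, ρ' (f a) (f b) = ρ a b) (b : B) :
    φ' (h.mapAlgHom h' f hf b) = f (φ b) :=
  φ'.apply_symm_apply _

theorem mapAlgHom_symm (h : IsCovariantization ρ ρt cmul φ)
    (h' : IsCovariantization ρ' ρt' cmul' φ') {f : A →ₐc[R] A'}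
    (hf : ∀ a b, ρ' (f a) (f b) = ρ a b) (a : A) :
    h.mapAlgHom h' f hf (φ.symm a) = φ'.symm (f a) :=
  φ'.injective <| by simp [apply_mapAlgHom]

variable {f : A →ₐc[R] A'} {d : A}

theorem mapAlgHom_surjective (h : IsCovariantization ρ ρt cmul φ)
    (h' : IsCovariantization ρ' ρt' cmul' φ') (hf : ∀ a b, ρ' (f a) (f b) = ρ a b)
    (hsurj : Function.Surjective f) : Function.Surjective (h.mapAlgHom h' f hf) := fun z => by
  obtain ⟨a, ha⟩ := hsurj (φ' z)
  exact ⟨φ.symm a, by rw [mapAlgHom_symm, ha, φ'.symm_apply_apply]⟩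

theorem ker_mapAlgHom (h : IsCovariantization ρ ρt cmul φ)
    (h' : IsCovariantization ρ' ρt' cmul' φ') (hf : ∀ a b, ρ' (f a) (f b) = ρ a b)
    (hd : IsTransparent ρ d) (hker : RingHom.ker (f : A →ₐ[R] A') = Ideal.span {d - 1}) :
    RingHom.ker (h.mapAlgHom h' f hf) = Ideal.span {φ.symm d - 1} := by
  have hmul (c : A) : φ (φ.symm c * (φ.symm d - 1)) = c * (d - 1) := by
    rw [mul_sub, mul_one, map_sub, h.map_mul_symm hd, φ.apply_symm_apply, mul_sub, mul_one]
  ext b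
  calc b ∈ RingHom.ker (h.mapAlgHom h' f hf) ↔ φ b ∈ RingHom.ker (f : A →ₐ[R] A') := by
        rw [RingHom.mem_ker, RingHom.mem_ker, ← φ'.map_eq_zero_iff, apply_mapAlgHom]
        rfl
    _ ↔ ∃ c, c * (d - 1) = φ b := by rw [hker, Ideal.mem_span_singleton']
    _ ↔ ∃ c, φ.symm c * (φ.symm d - 1) = b := by simp only [← hmul, φ.injective.eq_iff]
    _ ↔ b ∈ Ideal.span {φ.symm d - 1} := by
        rw [Ideal.mem_span_singleton', φ.symm.surjective.exists]

theorem exists_ringQuot_algEquiv (h : IsCovariantization ρ ρt cmul φ)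
    (h' : IsCovariantization ρ' ρt' cmul' φ') (hf : ∀ a b, ρ' (f a) (f b) = ρ a b)
    (hd : IsTransparent ρ d) (hfd : IsUniversalEqOne (f : A →ₐ[R] A') d) :
    ∃ e : RingQuot (fun a b : B => a = φ.symm d ∧ b = 1) ≃ₐ[R] B',
      ∀ a, e (RingQuot.mkAlgHom R _ (φ.symm a)) = φ'.symm (f a) := by
  obtain ⟨e, he⟩ := exists_ringQuot_eq_one_algEquiv (h.mapAlgHom_surjective h' hf hfd.surjective)
    (h.ker_mapAlgHom h' hf hd (hfd.ker_eq (hd.commute h.isDQT)))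
  exact ⟨e, fun a => (he _).trans (h.mapAlgHom_symm h' hf a)⟩

theorem isCentralLocalization (h : IsCovariantization ρ ρt cmul φ)
    (h' : IsCovariantization ρ' ρt' cmul' φ') (hf : ∀ a b, ρ' (f a) (f b) = ρ a b)
    {t : A'} (hd : IsTransparent ρ d) (ht : IsTransparent ρ' t)
    (hfd : IsCentralLocalization (f : A →ₐ[R] A') d t) :
    IsCentralLocalization (h.mapAlgHom h' f hf) (φ.symm d) (φ'.symm t) where
  commute b := (h'.commute ht _).symm
  mul_eq_one := φ'.injective <| by
    rw [h'.map_mul_symm ht, apply_mapAlgHom, φ.apply_symm_apply, h'.map_one]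
    exact hfd.mul_eq_one
  exists_eq z := by
    obtain ⟨a, k, hz⟩ := hfd.exists_eq (φ' z)
    refine ⟨φ.symm a, k, φ'.injective ?_⟩
    rw [h'.map_mul_symm_pow ht, apply_mapAlgHom, φ.apply_symm_apply, hz]
    rfl
  exists_pow_mul_eq_zero b hb := by
    obtain ⟨k, hk⟩ := hfd.exists_pow_mul_eq_zero (φ b) <|
      (h.apply_mapAlgHom h' hf b).symm.trans (by rw [hb, map_zero])
    exact ⟨k, φ.injective <| by rw [h.map_symm_pow_mul hd, hk, map_zero]⟩

theorem exists_adjoinCentralInverse_algEquiv (h : IsCovariantization ρ ρt cmul φ)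
    (h' : IsCovariantization ρ' ρt' cmul' φ') (hf : ∀ a b, ρ' (f a) (f b) = ρ a b)
    {t : A'} (hd : IsTransparent ρ d) (hfd : IsAdjoinCentralInverse (f : A →ₐ[R] A') d t)
    {Q : Type u} [Ring Q] [Algebra R Q] {ι : B →ₐ[R] Q} {s : Q}
    (hι : IsAdjoinCentralInverse ι (φ.symm d) s) :
    ∃ e : Q ≃ₐ[R] B', (∀ a, e (ι (φ.symm a)) = φ'.symm (f a)) ∧ e s = φ'.symm t := by
  have hloc := hfd.isCentralLocalization (hd.commute h.isDQT)
  have ht : IsTransparent ρ' t :=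
    (hd.map h'.isDQT hf fun _ _ => hloc.algHom_ext).of_mul_eq_one h'.isDQT hfd.mul_eq_one
      ((hfd.commute d).eq.symm.trans hfd.mul_eq_one)
  obtain ⟨e, he, hes⟩ := hι.exists_algEquiv (h.commute hd)
    (h.isCentralLocalization h' hf hd ht hloc)
  exact ⟨e, fun a => (he _).trans (h.mapAlgHom_symm h' hf a), hes⟩

end IsCovariantization

end DualQuasitriangular

section QuantumMatrices

variable {R : Type u} [CommRing R] {n : ℕ} {qq qr : Rˣ} {A A' B C : Type u} [Ring A] [Ring A']
  [Ring B] [Algebra R B] [Ring C] [Algebra R C]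

namespace OqMnRels

variable {y : Fin n → Fin n → B}

theorem map (hy : OqMnRels n qq y) (f : B →ₐ[R] C) : OqMnRels n qq fun i j => f (y i j) := by
  obtain ⟨h₁, h₂, h₃, h₄⟩ := hy
  refine ⟨fun i j k h => ?_, fun i j k h => ?_, fun i j k l h h' => ?_, fun i j k l h h' => ?_⟩
  · rw [← map_mul, h₁ i j k h, map_smul, map_mul]
  · rw [← map_mul, h₂ i j k h, map_smul, map_mul]
  · rw [← map_mul, h₃ i j k l h h', map_mul]
  · rw [← map_mul, ← map_mul, ← map_sub, h₄ i j k l h h', map_smul, map_mul]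

theorem of_injective {f : B →ₐ[R] C} (hf : Function.Injective f)
    (hy : OqMnRels n qq fun i j => f (y i j)) : OqMnRels n qq y := by
  obtain ⟨h₁, h₂, h₃, h₄⟩ := hy
  refine ⟨fun i j k h => hf ?_, fun i j k h => hf ?_, fun i j k l h h' => hf ?_,
    fun i j k l h h' => hf ?_⟩
  · simpa using h₁ i j k h
  · simpa using h₂ i j k h
  · simpa using h₃ i j k l h h'
  · simpa using h₄ i j k l h h'

end OqMnRels

/-- `B` is presented by the generators `x i j` and the relations of `O_q(M_n)`, the universal
property being stated in the universe of `B`. -/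
structure IsOqMn (n : ℕ) (qq : Rˣ) (x : Fin n → Fin n → B) : Prop where
  rels : OqMnRels n qq x
  existsUnique : ∀ (C : Type u) [Ring C] [Algebra R C] (y : Fin n → Fin n → C),
    OqMnRels n qq y → ∃! f : B →ₐ[R] C, ∀ i j, f (x i j) = y i j

/-- `B` is presented by the generators `x i j`, the relations of `O_q(M_n)` and `d_q = 1`. -/
structure IsOqSLn (n : ℕ) (qq : Rˣ) (x : Fin n → Fin n → B) : Prop where
  rels : OqMnRels n qq x ∧ qdet qq x = 1
  existsUnique : ∀ (C : Type u) [Ring C] [Algebra R C] (y : Fin n → Fin n → C),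
    OqMnRels n qq y ∧ qdet qq y = 1 → ∃! f : B →ₐ[R] C, ∀ i j, f (x i j) = y i j

/-- `B` is presented by the generators `x i j` and `t`, the relations of `O_q(M_n)`, and those
making `t` a central inverse of `d_q`. -/
structure IsOqGLn (n : ℕ) (qq : Rˣ) (x : Fin n → Fin n → B) (t : B) : Prop where
  rels : OqMnRels n qq x ∧ (∀ i j, t * x i j = x i j * t) ∧ t * qdet qq x = 1 ∧ qdet qq x * t = 1
  existsUnique : ∀ (C : Type u) [Ring C] [Algebra R C] (y : Fin n → Fin n → C) (s : C),
    OqMnRels n qq y ∧ (∀ i j, s * y i j = y i j * s) ∧ s * qdet qq y = 1 ∧ qdet qq y * s = 1 →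
      ∃! f : B →ₐ[R] C, (∀ i j, f (x i j) = y i j) ∧ f t = s

namespace IsOqMn

variable {x : Fin n → Fin n → B}

theorem algHom_ext (hx : IsOqMn n qq x) {f g : B →ₐ[R] C} (h : ∀ i j, f (x i j) = g (x i j)) :
    f = g :=
  (hx.existsUnique C _ (hx.rels.map g)).unique h fun _ _ => rfl

theorem adjoin_eq_top (hx : IsOqMn n qq x) : Algebra.adjoin R (Set.range x.uncurry) = ⊤ := by
  let S := Algebra.adjoin R (Set.range x.uncurry)
  obtain ⟨f, hf, -⟩ := hx.existsUnique S
    (fun i j => ⟨x i j, Algebra.subset_adjoin ⟨(i, j), rfl⟩⟩)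
    (OqMnRels.of_injective (f := S.val) Subtype.val_injective hx.rels)
  exact subalgebra_eq_top_of_retraction f <| hx.algHom_ext fun i j => congrArg Subtype.val (hf i j)

theorem isUniversalEqOne (hx : IsOqMn n qq x) {y : Fin n → Fin n → C} (hy : IsOqSLn n qq y)
    {π : B →ₐ[R] C} (hπ : ∀ i j, π (x i j) = y i j) : IsUniversalEqOne π (qdet qq x) where
  map_eq_one := by simp only [map_qdet, hπ, hy.rels.2]
  existsUnique D _ _ f hf := by
    obtain ⟨g, hg, huniq⟩ := hy.existsUnique D (fun i j => f (x i j))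
      ⟨hx.rels.map f, by rw [← map_qdet, hf]⟩
    refine ⟨g, DFunLike.congr_fun <| hx.algHom_ext (f := g.comp π) fun i j => ?_,
      fun g' hg' => huniq g' fun i j => ?_⟩
    · rw [AlgHom.comp_apply, hπ, hg]
    · rw [← hπ, hg']

theorem isAdjoinCentralInverse (hx : IsOqMn n qq x) {y : Fin n → Fin n → C} {t : C}
    (hy : IsOqGLn n qq y t) {f : B →ₐ[R] C} (hf : ∀ i j, f (x i j) = y i j) :
    IsAdjoinCentralInverse f (qdet qq x) t where
  commute b := by
    have hcomm : (⊤ : Subalgebra R B) ≤ (Subalgebra.centralizer R {t}).comap f := by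
      rw [← hx.adjoin_eq_top, Algebra.adjoin_le_iff]
      rintro _ ⟨⟨i, j⟩, rfl⟩
      simpa [Set.mem_centralizer_iff, hf] using hy.rels.2.1 i j
    exact (Subalgebra.mem_centralizer_iff R |>.1 (hcomm Algebra.mem_top) t rfl).symm
  mul_eq_one := by simp only [map_qdet, hf, hy.rels.2.2.2]
  existsUnique D _ _ g s hcomm hs := by
    obtain ⟨F, ⟨hF, hFt⟩, huniq⟩ := hy.existsUnique D (fun i j => g (x i j)) s
      ⟨hx.rels.map g, fun i j => (hcomm _).eq.symm, by rw [← map_qdet, ← (hcomm _).eq, hs],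
        by rw [← map_qdet, hs]⟩
    refine ⟨F, ⟨DFunLike.congr_fun <| hx.algHom_ext (f := F.comp f) fun i j => ?_, hFt⟩,
      fun F' hF' => huniq F' ⟨fun i j => ?_, hF'.2⟩⟩
    · rw [AlgHom.comp_apply, hf, hF]
    · rw [← hf, hF'.1]

theorem exists_bialgHom [Bialgebra R A] [Bialgebra R A'] {x : Fin n → Fin n → A}
    {y : Fin n → Fin n → A'} (hx : IsOqMn n qq x) (hxc : IsMatrixCoalgebra R x)
    (hy : OqMnRels n qq y) (hyc : IsMatrixCoalgebra R y) :
    ∃ f : A →ₐc[R] A', ∀ i j, f (x i j) = y i j := by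
  obtain ⟨f, hf, -⟩ := hx.existsUnique A' y hy
  refine ⟨BialgHom.ofAlgHom f (hx.algHom_ext fun i j => ?_) (hx.algHom_ext fun i j => ?_), hf⟩
  · simp [hf, hxc.counit, hyc.counit]
  · simp [hf, hxc.comul, hyc.comul]

end IsOqMn

theorem perm_eq_one_of_forall_le {σ : Equiv.Perm (Fin n)} (h : ∀ i, i ≤ σ i) : σ = 1 := by
  have hsum : ∑ i : Fin n, (i : ℕ) = ∑ i, (σ i : ℕ) := (Equiv.sum_comp σ fun i => (i : ℕ)).symm
  have := (Finset.sum_eq_sum_iff_of_le fun i _ => Fin.le_def.1 (h i)).1 hsum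
  ext i
  exact (this i (Finset.mem_univ i)).symm

theorem inversions_one : inversions (1 : Equiv.Perm (Fin n)) = 0 := by
  rw [inversions, Finset.card_eq_zero, Finset.filter_eq_empty_iff]
  exact fun p _ hp => lt_asymm hp.1 hp.2

theorem qdet_eq_prod_diag {y : Fin n → Fin n → B}
    (h : ∀ σ : Equiv.Perm (Fin n), σ ≠ 1 → ∃ i, y i (σ i) = 0) :
    qdet qq y = ((List.finRange n).map fun i => y i i).prod := by
  rw [qdet, Finset.sum_eq_single 1]
  · simp [inversions_one]
  · intro σ _ hσ
    obtain ⟨i, hi⟩ := h σ hσ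
    rw [List.prod_eq_zero, smul_zero]
    exact List.mem_map.2 ⟨i, List.mem_finRange i, hi⟩
  · simp

theorem qdet_of_upperTriangular {y : Fin n → Fin n → B} (h : ∀ i j, j < i → y i j = 0) :
    qdet qq y = ((List.finRange n).map fun i => y i i).prod := by
  refine qdet_eq_prod_diag fun σ hσ => ?_
  by_contra! hne
  exact hσ (perm_eq_one_of_forall_le fun i => not_lt.1 fun hi => hne i (h _ _ hi))

theorem qdet_of_lowerTriangular {y : Fin n → Fin n → B} (h : ∀ i j, i < j → y i j = 0) :
    qdet qq y = ((List.finRange n).map fun i => y i i).prod := by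
  refine qdet_eq_prod_diag fun σ hσ => ?_
  by_contra! hne
  refine hσ (inv_eq_one.1 (perm_eq_one_of_forall_le fun i => not_lt.1 fun hi => ?_))
  exact hne (σ⁻¹ i) (h _ _ (by simpa using hi))

theorem qdet_isGroupLikeElem [Bialgebra R A] {x : Fin n → Fin n → A} (hx : OqMnRels n qq x)
    (hxc : IsMatrixCoalgebra R x) : IsGroupLikeElem R (qdet qq x) where
  comul_eq_tmul_self := by
    rw [← qdet_sum_tmul hx, ← Bialgebra.comulAlgHom_apply, map_qdet]
    simp only [Bialgebra.comulAlgHom_apply, hxc.comul]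
  counit_eq_one := by
    rw [← Bialgebra.counitAlgHom_apply, map_qdet, qdet_of_upperTriangular]
    · simp [hxc.counit]
    · intro i j hij
      simp [hxc.counit, hij.ne']

/-- The diagonal matrix by which the diagonal generator `x^i_i` acts in the vector representations
coming from the standard dual quasitriangular structure. -/
def rmatDiag (qr : Rˣ) (i : Fin n) : Matrix (Fin n) (Fin n) R :=
  Matrix.diagonal fun k => ((qr⁻¹ : Rˣ) : R) * if i = k then ((qr ^ n : Rˣ) : R) else 1

-- This is where the normalization of `𝓡` by `q^{-1/n}` enters.
theorem prod_rmatDiag (qr : Rˣ) : ((List.finRange n).map (rmatDiag (n := n) qr)).prod = 1 := by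
  have h := map_list_prod (Matrix.diagonalRingHom (Fin n) R)
    ((List.finRange n).map fun i k =>
      ((qr⁻¹ : Rˣ) : R) * if i = k then ((qr ^ n : Rˣ) : R) else 1)
  rw [List.map_map, ← Fin.prod_univ_def] at h
  refine h.symm.trans ?_
  rw [← map_one (Matrix.diagonalRingHom (Fin n) R)]
  congr 1
  funext k
  rw [Finset.prod_apply, Finset.prod_mul_distrib, Finset.prod_ite_eq' Finset.univ k]
  simp [← mul_pow]

theorem rmatVal_self_left (i k l : Fin n) : RmatVal n qr i i k l = rmatDiag qr i k l := by
  rw [RmatVal, rmatDiag, Matrix.diagonal_apply]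
  grind

theorem rmatVal_self_right (i k l : Fin n) : RmatVal n qr l k i i = rmatDiag qr i k l := by
  rw [RmatVal, rmatDiag, Matrix.diagonal_apply]
  grind

theorem rmatVal_eq_zero_of_left_gt {i j : Fin n} (h : j < i) (k l : Fin n) :
    RmatVal n qr i j k l = 0 := by
  grind [RmatVal]

theorem rmatVal_eq_zero_of_right_lt {i j : Fin n} (h : i < j) (k l : Fin n) :
    RmatVal n qr k l i j = 0 := by
  grind [RmatVal]

section Bialgebra

variable [Bialgebra R A] {x : Fin n → Fin n → A} {ρ : A →ₗ[R] A →ₗ[R] R}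

theorem leftMatrixRep_qdet (hρ : IsDQT ρ) (hxc : IsMatrixCoalgebra R x)
    (hρx : ∀ i j k l, ρ (x i j) (x k l) = RmatVal n qr i j k l) :
    hρ.leftMatrixRep hxc (qdet (qr ^ n) x) = 1 := by
  rw [map_qdet, qdet_of_upperTriangular, ← prod_rmatDiag qr]
  · congr 2
    ext i k l
    rw [hρ.leftMatrixRep_apply, hρx, rmatVal_self_left]
  · intro i j hij
    ext k l
    rw [hρ.leftMatrixRep_apply, hρx, rmatVal_eq_zero_of_left_gt hij, Matrix.zero_apply]

theorem rightMatrixRep_qdet (hρ : IsDQT ρ) (hxc : IsMatrixCoalgebra R x)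
    (hρx : ∀ i j k l, ρ (x i j) (x k l) = RmatVal n qr i j k l) :
    hρ.rightMatrixRep hxc (qdet (qr ^ n) x) = 1 := by
  rw [map_qdet, qdet_of_lowerTriangular, ← prod_rmatDiag qr]
  · congr 2
    ext i k l
    rw [hρ.rightMatrixRep_apply, hρx, rmatVal_self_right]
  · intro i j hij
    ext k l
    rw [hρ.rightMatrixRep_apply, hρx, rmatVal_eq_zero_of_right_lt hij, Matrix.zero_apply]

theorem IsOqMn.qdet_isTransparent (hx : IsOqMn n (qr ^ n) x) (hxc : IsMatrixCoalgebra R x)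
    (hρ : IsDQT ρ) (hρx : ∀ i j k l, ρ (x i j) (x k l) = RmatVal n qr i j k l) :
    IsTransparent ρ (qdet (qr ^ n) x) := by
  have hd := qdet_isGroupLikeElem hx.rels hxc
  have hleft : hρ.leftCharacter hd = Bialgebra.counitAlgHom R A := hx.algHom_ext fun k l =>
    (congrFun₂ (leftMatrixRep_qdet hρ hxc hρx) k l).trans <| by
      simp [hxc.counit, Matrix.one_apply]
  have hright : hρ.rightCharacter hd = Bialgebra.counitAlgHom R A := hx.algHom_ext fun k l =>
    (congrFun₂ (rightMatrixRep_qdet hρ hxc hρx) l k).trans <| by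
      simp [hxc.counit, Matrix.one_apply, eq_comm]
  exact { hd with
    left := congrArg AlgHom.toLinearMap hleft
    right := congrArg AlgHom.toLinearMap hright }

end Bialgebra

end QuantumMatrices

/-- Let `B_q(M_n)` be the covariantized algebra of `O_q(M_n)` and let `d̲_q` be the
element of `B_q(M_n)` corresponding to the quantum determinant `d_q ∈ O_q(M_n)`
under the identity map of the common underlying `R`-module.  Then `d̲_q` is central
in `B_q(M_n)`, and:
(1) the covariantized algebra of `O_q(SL_n) = O_q(M_n)/(d_q − 1)` is isomorphic to
    the quotient `B_q(M_n)/(d̲_q − 1)`;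
(2) the covariantized algebra of `O_q(GL_n) = O_q(M_n)[d_q⁻¹]` is isomorphic to
    `B_q(M_n)[t]/(d̲_q ⬝ t − 1)`, the algebra obtained from `B_q(M_n)` by adjoining
    a central element `t` subject to `d̲_q ⬝ t = 1`.
Here `O_q(SL_n)` and `O_q(GL_n)` carry the descended/extended dual quasitriangular
structures, all presented algebras are axiomatised by their relations together with
their universal properties, and the covariantized algebras are realised as algebras
`BA`, `BAs`, `BGL` identified with the corresponding module via a linear equivalence
transporting the product to the covariantized product. -/
theorem covariantized_SL_GL_quotient_localization
    {R : Type u} [CommRing R] (n : ℕ) (hn : 2 ≤ n) (qr : Rˣ)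
    {A : Type u} [Ring A] [Bialgebra R A] (x : Fin n → Fin n → A)
    (hx : OqMnRels n (qr ^ n) x)
    (hxuniv : ∀ (B : Type u) [Ring B] [Algebra R B] (y : Fin n → Fin n → B),
      OqMnRels n (qr ^ n) y → ∃! f : A →ₐ[R] B, ∀ i j, f (x i j) = y i j)
    (hΔ : ∀ i j, Coalgebra.comul (R := R) (x i j) = ∑ k, x i k ⊗ₜ[R] x k j)
    (hε : ∀ i j, Coalgebra.counit (R := R) (x i j) = if i = j then (1 : R) else 0)
    (ρ : A →ₗ[R] A →ₗ[R] R) (hρ : IsDQT ρ)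
    (hρx : ∀ i j k l, ρ (x i j) (x k l) = RmatVal n qr i j k l)
    (ρt : A →ₗ[R] A →ₗ[R] R) (hρt : IsCopConvInv ρ ρt)
    (cmul : A → A → A) (hcmul : CovChar ρ ρt cmul)
    -- `BA` is the covariantized algebra `B_q(M_n)` of `O_q(M_n)`
    (BA : Type u) [Ring BA] [Algebra R BA] (φ : BA ≃ₗ[R] A)
    (hφ1 : φ 1 = 1) (hφm : ∀ a b : BA, φ (a * b) = cmul (φ a) (φ b))
    -- `As` is `O_q(SL_n) = O_q(M_n)/(d_q − 1)` with its descended structure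
    (As : Type u) [Ring As] [Bialgebra R As] (xs : Fin n → Fin n → As)
    (hxs : OqMnRels n (qr ^ n) xs ∧ qdet (qr ^ n) xs = 1)
    (hxsuniv : ∀ (B : Type u) [Ring B] [Algebra R B] (y : Fin n → Fin n → B),
      OqMnRels n (qr ^ n) y ∧ qdet (qr ^ n) y = 1 →
        ∃! f : As →ₐ[R] B, ∀ i j, f (xs i j) = y i j)
    (hΔs : ∀ i j, Coalgebra.comul (R := R) (xs i j) = ∑ k, xs i k ⊗ₜ[R] xs k j)
    (hεs : ∀ i j, Coalgebra.counit (R := R) (xs i j) = if i = j then (1 : R) else 0)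
    (ρs : As →ₗ[R] As →ₗ[R] R) (hρs : IsDQT ρs)
    (hρsx : ∀ i j k l, ρs (xs i j) (xs k l) = RmatVal n qr i j k l)
    (ρts : As →ₗ[R] As →ₗ[R] R) (hρts : IsCopConvInv ρs ρts)
    (cmuls : As → As → As) (hcmuls : CovChar ρs ρts cmuls)
    -- `BAs` is the covariantized algebra of `O_q(SL_n)`
    (BAs : Type u) [Ring BAs] [Algebra R BAs] (ψ : BAs ≃ₗ[R] As)
    (hψ1 : ψ 1 = 1) (hψm : ∀ a b : BAs, ψ (a * b) = cmuls (ψ a) (ψ b))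
    -- `AGL` is `O_q(GL_n) = O_q(M_n)[d_q⁻¹]` with its extended structure
    (AGL : Type u) [Ring AGL] [Bialgebra R AGL] (xg : Fin n → Fin n → AGL) (tg : AGL)
    (hxg : OqMnRels n (qr ^ n) xg ∧ (∀ i j, tg * xg i j = xg i j * tg) ∧
      tg * qdet (qr ^ n) xg = 1 ∧ qdet (qr ^ n) xg * tg = 1)
    (hxguniv : ∀ (B : Type u) [Ring B] [Algebra R B]
        (y : Fin n → Fin n → B) (ty : B),
      (OqMnRels n (qr ^ n) y ∧ (∀ i j, ty * y i j = y i j * ty) ∧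
        ty * qdet (qr ^ n) y = 1 ∧ qdet (qr ^ n) y * ty = 1) →
        ∃! f : AGL →ₐ[R] B, (∀ i j, f (xg i j) = y i j) ∧ f tg = ty)
    (hΔg : ∀ i j, Coalgebra.comul (R := R) (xg i j) = ∑ k, xg i k ⊗ₜ[R] xg k j)
    (hεg : ∀ i j, Coalgebra.counit (R := R) (xg i j) = if i = j then (1 : R) else 0)
    (hΔt : Coalgebra.comul (R := R) tg = tg ⊗ₜ[R] tg)
    (hεt : Coalgebra.counit (R := R) tg = 1)
    (ρg : AGL →ₗ[R] AGL →ₗ[R] R) (hρg : IsDQT ρg)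
    (hρgx : ∀ i j k l, ρg (xg i j) (xg k l) = RmatVal n qr i j k l)
    (ρtg : AGL →ₗ[R] AGL →ₗ[R] R) (hρtg : IsCopConvInv ρg ρtg)
    (cmulg : AGL → AGL → AGL) (hcmulg : CovChar ρg ρtg cmulg)
    -- `BGL` is the covariantized algebra of `O_q(GL_n)`
    (BGL : Type u) [Ring BGL] [Algebra R BGL] (ψg : BGL ≃ₗ[R] AGL)
    (hψg1 : ψg 1 = 1) (hψgm : ∀ a b : BGL, ψg (a * b) = cmulg (ψg a) (ψg b))
    -- `Q2` is `B_q(M_n)[t]`, obtained from `B_q(M_n)` by adjoining a central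
    -- element `t` subject to `d̲_q ⬝ t = 1`
    (Q2 : Type u) [Ring Q2] [Algebra R Q2] (ι : BA →ₐ[R] Q2) (tq : Q2)
    (hQ2c : ∀ b : BA, ι b * tq = tq * ι b)
    (hQ2r : ι (φ.symm (qdet (qr ^ n) x)) * tq = 1)
    (hQ2univ : ∀ (C : Type u) [Ring C] [Algebra R C] (g : BA →ₐ[R] C) (tc : C),
      (∀ b : BA, g b * tc = tc * g b) → g (φ.symm (qdet (qr ^ n) x)) * tc = 1 →
        ∃! h : Q2 →ₐ[R] C, (∀ b : BA, h (ι b) = g b) ∧ h tq = tc) :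
    (∀ b : BA, φ.symm (qdet (qr ^ n) x) * b = b * φ.symm (qdet (qr ^ n) x)) ∧
    (∃ f : RingQuot (fun a b : BA => a = φ.symm (qdet (qr ^ n) x) ∧ b = 1) ≃ₐ[R] BAs,
      ∀ i j, f (RingQuot.mkAlgHom R _ (φ.symm (x i j))) = ψ.symm (xs i j)) ∧
    (∃ f : Q2 ≃ₐ[R] BGL,
      (∀ i j, f (ι (φ.symm (x i j))) = ψg.symm (xg i j)) ∧ f tq = ψg.symm tg) := by
  have hO : IsOqMn n (qr ^ n) x := ⟨hx, hxuniv⟩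
  have hxc : IsMatrixCoalgebra R x := ⟨hΔ, hε⟩
  have hd : IsTransparent ρ (qdet (qr ^ n) x) := hO.qdet_isTransparent hxc hρ hρx
  have hB : IsCovariantization ρ ρt cmul φ := ⟨hρ, hρt, hcmul, hφ1, hφm⟩
  refine ⟨hB.commute hd, ?_, ?_⟩
  · have hBs : IsCovariantization ρs ρts cmuls ψ := ⟨hρs, hρts, hcmuls, hψ1, hψm⟩
    obtain ⟨π, hπ⟩ := hO.exists_bialgHom hxc hxs.1 ⟨hΔs, hεs⟩
    have hπρ := hρ.map_eq hρs hxc hO.adjoin_eq_top π fun i j k l => by simp only [hπ, hρsx, hρx]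
    obtain ⟨e, he⟩ := hB.exists_ringQuot_algEquiv hBs hπρ hd
      (hO.isUniversalEqOne ⟨hxs, hxsuniv⟩ hπ)
    exact ⟨e, fun i j => by rw [he, hπ]⟩
  · have hBg : IsCovariantization ρg ρtg cmulg ψg := ⟨hρg, hρtg, hcmulg, hψg1, hψgm⟩
    obtain ⟨g, hg⟩ := hO.exists_bialgHom hxc hxg.1 ⟨hΔg, hεg⟩
    have hgρ := hρ.map_eq hρg hxc hO.adjoin_eq_top g fun i j k l => by simp only [hg, hρgx, hρx]
    obtain ⟨e, he, het⟩ := hB.exists_adjoinCentralInverse_algEquiv hBg hgρ hd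
      (hO.isAdjoinCentralInverse ⟨hxg, hxguniv⟩ hg) ⟨hQ2c, hQ2r, hQ2univ⟩
    exact ⟨e, fun i j => by rw [he, hg], het⟩

end
end

section
/- Let A be a Hopf algebra over a commutative ring R equipped with a dual quasitriangular structure 𝓡, and let ⬝ denote the covariantized product on A. If g ∈ A is grouplike, i.e. Δ(g) = g ⊗ g and ε(g) = 1, then g is invertible in the covariantized algebra underline(A); explicitly, g ⬝ S(g) = 1 = S(g) ⬝ g. -/
open scoped TensorProduct BigOperators

noncomputable section

universe u

/-- `cmul` is the covariantized product
`a ⬝ b = a₍₂₎ b₍₃₎ 𝓡(a₍₃₎, S(b₍₁₎)) 𝓡(a₍₁₎, b₍₂₎)` of the dual quasitriangular Hopf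
algebra `(A, ρ)`, expressed via finite representations of the iterated
comultiplication. -/
def CovCharS {R : Type u} [CommRing R] {A : Type u} [Ring A] [HopfAlgebra R A]
    (ρ : A →ₗ[R] A →ₗ[R] R) (cmul : A → A → A) : Prop :=
  ∀ (a b : A) (s t : Finset ℕ) (a1 a2 a3 b1 b2 b3 : ℕ → A),
    comul2 (R := R) a = ∑ i ∈ s, a1 i ⊗ₜ[R] (a2 i ⊗ₜ[R] a3 i) →
    comul2 (R := R) b = ∑ j ∈ t, b1 j ⊗ₜ[R] (b2 j ⊗ₜ[R] b3 j) →
    cmul a b = ∑ i ∈ s, ∑ j ∈ t,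
      (ρ (a3 i) (HopfAlgebra.antipode (R := R) (b1 j)) * ρ (a1 i) (b2 j)) • (a2 i * b3 j)

/-!
For `a` grouplike, `𝓡(a, -)` is a character of `A`, because `𝓡` is anti-multiplicative in its second
argument and `R` is commutative. If `b` is grouplike too, the product is
`a ⬝ b = 𝓡(a, S(b)) 𝓡(a, b) ab`, whose scalar is the value of that character at `S(b)b = 1`. So `⬝`
agrees with the product of `A` on grouplike elements, where `S(g)` is the inverse of `g`.
-/

section Bialgebra

variable {R : Type u} [CommRing R] {A : Type u} [Ring A] [Bialgebra R A] {a : A}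

theorem comul2_of_isGroupLikeElem (ha : IsGroupLikeElem R a) :
    comul2 (R := R) a = a ⊗ₜ[R] (a ⊗ₜ[R] a) := by
  simp [comul2, ha.comul_eq_tmul_self]

variable {ρ : A →ₗ[R] A →ₗ[R] R}

theorem IsDQT.apply_one_of_isGroupLikeElem (hρ : IsDQT ρ) (ha : IsGroupLikeElem R a) :
    ρ a 1 = 1 := by
  obtain ⟨-, -, apply_one, -, -⟩ := hρ
  rw [apply_one, ha.counit_eq_one]

theorem IsDQT.apply_mul_of_isGroupLikeElem (hρ : IsDQT ρ) (ha : IsGroupLikeElem R a) (b c : A) :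
    ρ a (b * c) = ρ a b * ρ a c := by
  obtain ⟨-, apply_mul, -, -, -⟩ := hρ
  have anti : ρ a (b * c) = ρ a c * ρ a b := by
    simpa using apply_mul a b c {0} (fun _ => a) (fun _ => a) (by simp [ha.comul_eq_tmul_self])
  rw [anti, mul_comm]

end Bialgebra

section HopfAlgebra

variable {R : Type u} [CommRing R] {A : Type u} [Ring A] [HopfAlgebra R A]
  {ρ : A →ₗ[R] A →ₗ[R] R} {cmul : A → A → A} {a b : A}

theorem IsDQT.apply_antipode_mul_apply (hρ : IsDQT ρ) (ha : IsGroupLikeElem R a)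
    (hb : IsGroupLikeElem R b) : ρ a (HopfAlgebra.antipode R b) * ρ a b = 1 := by
  rw [← hρ.apply_mul_of_isGroupLikeElem ha, hb.antipode_mul_cancel,
    hρ.apply_one_of_isGroupLikeElem ha]

theorem CovCharS.apply_eq_smul_mul (hcmul : CovCharS ρ cmul) (ha : IsGroupLikeElem R a)
    (hb : IsGroupLikeElem R b) :
    cmul a b = (ρ a (HopfAlgebra.antipode R b) * ρ a b) • (a * b) := by
  simpa using hcmul a b {0} {0} (fun _ => a) (fun _ => a) (fun _ => a)
    (fun _ => b) (fun _ => b) (fun _ => b)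
    (by simp [comul2_of_isGroupLikeElem ha]) (by simp [comul2_of_isGroupLikeElem hb])

theorem CovCharS.apply_eq_mul (hcmul : CovCharS ρ cmul) (hρ : IsDQT ρ)
    (ha : IsGroupLikeElem R a) (hb : IsGroupLikeElem R b) : cmul a b = a * b := by
  rw [hcmul.apply_eq_smul_mul ha hb, hρ.apply_antipode_mul_apply ha hb, one_smul]

end HopfAlgebra

/-- If `g` is a grouplike element of a dual quasitriangular Hopf algebra `(A, 𝓡)`,
then `g` is invertible in the covariantized algebra: explicitly
`g ⬝ S(g) = 1 = S(g) ⬝ g`. -/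
theorem grouplike_isUnit_covariantized
    {R : Type u} [CommRing R] {A : Type u} [Ring A] [HopfAlgebra R A]
    (ρ : A →ₗ[R] A →ₗ[R] R) (hρ : IsDQT ρ)
    (cmul : A → A → A) (hcmul : CovCharS ρ cmul)
    (g : A) (hg : Coalgebra.comul (R := R) g = g ⊗ₜ[R] g)
    (hg' : Coalgebra.counit (R := R) g = 1) :
    cmul g (HopfAlgebra.antipode (R := R) g) = 1 ∧
      cmul (HopfAlgebra.antipode (R := R) g) g = 1 := by
  have hgl : IsGroupLikeElem R g := ⟨hg', hg⟩
  constructor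
  · rw [hcmul.apply_eq_mul hρ hgl hgl.antipode, hgl.mul_antipode_cancel]
  · rw [hcmul.apply_eq_mul hρ hgl.antipode hgl, hgl.antipode_mul_cancel]

end
end

section
/- Let n ≥ 2 and R a commutative ring with invertible element q^{1/n}, q := (q^{1/n})^n. In the common underlying R-module of O_q(M_n) and B_q(M_n), for every N ≥ 1 and all indices k₁, …, k_{N+1}, l₁, …, l_{N+1} ∈ {1, …, n} the following identity holds: (x^{k₁}_{l₁} x^{k₂}_{l₂} ⋯ x^{k_N}_{l_N}) x^{k_{N+1}}_{l_{N+1}} = Σ (Π_{i=1}^{N} 𝓡⁻¹(x^{k_{N−i+1}}_{α_{N−i+1}}, x^{γ_i}_{γ_{i+1}}) 𝓡(x^{β_i}_{l_i}, x^{δ_i}_{δ_{i+1}})) · (x^{α₁}_{β₁} x^{α₂}_{β₂} ⋯ x^{α_N}_{β_N}) ⬝ x^{δ_{N+1}}_{l_{N+1}}, where all products of generators x are taken with the original product of O_q(M_n), ⬝ is the covariantized product, and the sum runs over all indices α_i, β_i ∈ {1, …, n} (1 ≤ i ≤ N) and γ_i, δ_i ∈ {1, …, n} (1 ≤ i ≤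 N + 1) subject to γ₁ = k_{N+1} and γ_{N+1} = δ₁. -/
open scoped TensorProduct BigOperators

noncomputable section

universe u

/-- `ρinv` is the convolution inverse of `ρ` in `Hom(A ⊗ A, R)`. -/
def IsConvInv {R : Type u} [CommRing R] {A : Type u} [Ring A] [Bialgebra R A]
    (ρ ρinv : A →ₗ[R] A →ₗ[R] R) : Prop :=
  ∀ (a b : A) (s t : Finset ℕ) (a1 a2 b1 b2 : ℕ → A),
    Coalgebra.comul (R := R) a = ∑ i ∈ s, a1 i ⊗ₜ[R] a2 i →
    Coalgebra.comul (R := R) b = ∑ j ∈ t, b1 j ⊗ₜ[R] b2 j →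
    (∑ i ∈ s, ∑ j ∈ t, ρinv (a1 i) (b1 j) * ρ (a2 i) (b2 j)
        = Coalgebra.counit (R := R) a * Coalgebra.counit (R := R) b) ∧
    (∑ i ∈ s, ∑ j ∈ t, ρ (a1 i) (b1 j) * ρinv (a2 i) (b2 j)
        = Coalgebra.counit (R := R) a * Coalgebra.counit (R := R) b)

/-!
For matrix coefficients `a`, `b` of two comodules, cancelling `𝓡̃` in the definition of `⬝` gives
`𝓡(a₍₂₎, b₍₁₎) a₍₁₎ ⬝ b₍₂₎ = 𝓡(a₍₁₎, b₍₁₎) a₍₂₎ b₍₂₎`, and cancelling `𝓡` on the right with `𝓡⁻¹`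
expresses `a b` through `⬝`. When `a` runs through the coefficients of a tensor power of a comodule,
`𝓡(-, b)` is multiplicative and, by uniqueness of inverses, `𝓡⁻¹(-, b)` is antimultiplicative, so
both become ordered products of matrices; expanding these over paths of indices gives the formula.
-/

open scoped Matrix Kronecker Matrix.Module

section FiniteFamilies

variable {R : Type u} [CommRing R] {A : Type u} [Ring A] [Bialgebra R A]
  {ι κ : Type*} [Fintype ι] [Fintype κ] {ρ σ : A →ₗ[R] A →ₗ[R] R} {a b : A}
  {a₁ a₂ a₃ : κ → A} {b₁ b₂ b₃ : ι → A}

theorem IsDQT.mul_apply (hρ : IsDQT ρ) (a a' : A)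
    (hb : Coalgebra.comul (R := R) b = ∑ j, b₁ j ⊗ₜ[R] b₂ j) :
    ρ (a * a') b = ∑ j, ρ a (b₁ j) * ρ a' (b₂ j) := by
  obtain ⟨e⟩ := nonempty_embedding_nat ι
  simpa [e.injective.extend_apply] using hρ.1 a a' b (Finset.univ.map e)
    (Function.extend e b₁ 0) (Function.extend e b₂ 0) (by simpa [e.injective.extend_apply] using hb)

theorem IsDQT.one_apply (hρ : IsDQT ρ) (a : A) : ρ 1 a = Coalgebra.counit (R := R) a :=
  hρ.2.2.2.1 a

theorem IsConvInv.sum_mul_eq (h : IsConvInv ρ σ)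
    (ha : Coalgebra.comul (R := R) a = ∑ i, a₁ i ⊗ₜ[R] a₂ i)
    (hb : Coalgebra.comul (R := R) b = ∑ j, b₁ j ⊗ₜ[R] b₂ j) :
    (∑ i, ∑ j, σ (a₁ i) (b₁ j) * ρ (a₂ i) (b₂ j) =
        Coalgebra.counit (R := R) a * Coalgebra.counit (R := R) b) ∧
      ∑ i, ∑ j, ρ (a₁ i) (b₁ j) * σ (a₂ i) (b₂ j) =
        Coalgebra.counit (R := R) a * Coalgebra.counit (R := R) b := by
  obtain ⟨d⟩ := nonempty_embedding_nat κ
  obtain ⟨e⟩ := nonempty_embedding_nat ι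
  simpa [d.injective.extend_apply, e.injective.extend_apply] using
    h a b (Finset.univ.map d) (Finset.univ.map e)
      (Function.extend d a₁ 0) (Function.extend d a₂ 0)
      (Function.extend e b₁ 0) (Function.extend e b₂ 0)
      (by simpa [d.injective.extend_apply] using ha) (by simpa [e.injective.extend_apply] using hb)

theorem IsCopConvInv.sum_mul_eq (h : IsCopConvInv ρ σ)
    (ha : Coalgebra.comul (R := R) a = ∑ i, a₁ i ⊗ₜ[R] a₂ i)
    (hb : Coalgebra.comul (R := R) b = ∑ j, b₁ j ⊗ₜ[R] b₂ j) :
    ∑ i, ∑ j, σ (a₁ i) (b₂ j) * ρ (a₂ i) (b₁ j) =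
      Coalgebra.counit (R := R) a * Coalgebra.counit (R := R) b := by
  obtain ⟨d⟩ := nonempty_embedding_nat κ
  obtain ⟨e⟩ := nonempty_embedding_nat ι
  simpa [d.injective.extend_apply, e.injective.extend_apply] using
    (h a b (Finset.univ.map d) (Finset.univ.map e)
      (Function.extend d a₁ 0) (Function.extend d a₂ 0)
      (Function.extend e b₁ 0) (Function.extend e b₂ 0)
      (by simpa [d.injective.extend_apply] using ha)
      (by simpa [e.injective.extend_apply] using hb)).1

theorem CovChar.eq_sum {cmul : A → A → A} (h : CovChar ρ σ cmul)
    (ha : comul2 (R := R) a = ∑ i, a₁ i ⊗ₜ[R] (a₂ i ⊗ₜ[R] a₃ i))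
    (hb : comul2 (R := R) b = ∑ j, b₁ j ⊗ₜ[R] (b₂ j ⊗ₜ[R] b₃ j)) :
    cmul a b = ∑ i, ∑ j, (σ (a₃ i) (b₁ j) * ρ (a₁ i) (b₂ j)) • (a₂ i * b₃ j) := by
  obtain ⟨d⟩ := nonempty_embedding_nat κ
  obtain ⟨e⟩ := nonempty_embedding_nat ι
  simpa [d.injective.extend_apply, e.injective.extend_apply] using
    h a b (Finset.univ.map d) (Finset.univ.map e)
      (Function.extend d a₁ 0) (Function.extend d a₂ 0) (Function.extend d a₃ 0)
      (Function.extend e b₁ 0) (Function.extend e b₂ 0) (Function.extend e b₃ 0)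
      (by simpa [d.injective.extend_apply] using ha) (by simpa [e.injective.extend_apply] using hb)

end FiniteFamilies

/-- The entries of `x` are the matrix coefficients of a finite free comodule:
`Δ(x^i_j) = ∑ₖ x^i_k ⊗ x^k_j` and `ε(x^i_j) = δ^i_j`. -/
structure IsComatrix (R : Type*) [CommSemiring R] {C : Type*} [AddCommMonoid C] [Module R C]
    [Coalgebra R C] {κ : Type*} [Fintype κ] [DecidableEq κ] (x : Matrix κ κ C) : Prop where
  comul_apply : ∀ i j, Coalgebra.comul (R := R) (x i j) = ∑ k, x i k ⊗ₜ[R] x k j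
  counit_apply : ∀ i j, Coalgebra.counit (R := R) (x i j) = if i = j then (1 : R) else 0

/-- The values `σ(x^k_l, y^i_j)` of a bilinear form, as a matrix over `(k, l)` whose entries are
matrices over `(i, j)`. For comatrices `x` and `y`, convolution of bilinear forms becomes the
product of these matrices. -/
def pairing {R C D κ ι : Type*} [CommSemiring R] [AddCommMonoid C] [Module R C]
    [AddCommMonoid D] [Module R D] (σ : C →ₗ[R] D →ₗ[R] R) (x : Matrix κ κ C)
    (y : Matrix ι ι D) : Matrix κ κ (Matrix ι ι R) :=
  x.map fun a => y.map (σ a)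

/-- The comatrix of the `N`-th tensor power of a comodule with comatrix `x`: its entries are the
words `x^{K₁}_{L₁} ⋯ x^{K_N}_{L_N}`. -/
def tensorPow {A ι : Type*} [Monoid A] (x : Matrix ι ι A) (N : ℕ) :
    Matrix (Fin N → ι) (Fin N → ι) A :=
  Matrix.of fun K L => ((List.finRange N).map fun m => x (K m) (L m)).prod

section TensorPow

variable {A ι : Type*} [Monoid A] (x : Matrix ι ι A)

theorem tensorPow_zero : tensorPow x 0 = Matrix.of fun _ _ => 1 := by
  simp [tensorPow]

theorem tensorPow_succ (N : ℕ) :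
    tensorPow x (N + 1) = (x ⊗ₖ tensorPow x N).submatrix
      (Fin.consEquiv fun _ => ι).symm (Fin.consEquiv fun _ => ι).symm := by
  ext K L
  simp [tensorPow, List.finRange_succ, Function.comp_def, Fin.consEquiv, Fin.tail]

theorem tensorPow_succ_apply_last {N : ℕ} (K L : Fin (N + 1) → ι) :
    tensorPow x (N + 1) K L =
      tensorPow x N (Fin.init K) (Fin.init L) * x (K (Fin.last N)) (L (Fin.last N)) := by
  simp [tensorPow, List.finRange_succ_last, Function.comp_def, Fin.init]

end TensorPow

theorem pairing_tensorPow_succ {R A D ι κ : Type*} [CommSemiring R] [Semiring A] [Module R A]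
    [AddCommMonoid D] [Module R D] (σ : A →ₗ[R] D →ₗ[R] R) (x : Matrix κ κ A) (y : Matrix ι ι D)
    {N : ℕ} (K L : Fin (N + 1) → κ) : pairing σ (tensorPow x (N + 1)) y K L =
      pairing σ (x ⊗ₖ tensorPow x N) y (K 0, Fin.tail K) (L 0, Fin.tail L) := by
  rw [tensorPow_succ]
  rfl

section Comatrix

variable {R : Type u} [CommRing R] {A : Type u} [Ring A] [Bialgebra R A]
  {ι κ κ' : Type*} [Fintype ι] [DecidableEq ι] {ρ ρinv ρt : A →ₗ[R] A →ₗ[R] R}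
  {cmul : A → A → A} {x : Matrix κ κ A} {x' : Matrix κ' κ' A} {y : Matrix ι ι A}

theorem IsDQT.pairing_kronecker (hρ : IsDQT ρ) (hy : IsComatrix R y) (k l : κ × κ') :
    pairing ρ (x ⊗ₖ x') y k l = pairing ρ x y k.1 l.1 * pairing ρ x' y k.2 l.2 := by
  ext i j
  simp [pairing, Matrix.mul_apply, hρ.mul_apply _ _ (hy.comul_apply i j)]

theorem IsDQT.pairing_tensorPow (hρ : IsDQT ρ) (hy : IsComatrix R y) {N : ℕ}
    (K L : Fin N → κ) :
    pairing ρ (tensorPow x N) y K L = (List.ofFn fun i => pairing ρ x y (K i) (L i)).prod := by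
  induction N with
  | zero =>
    ext i j
    simp [pairing, tensorPow_zero, hρ.one_apply, hy.counit_apply, Matrix.one_apply]
  | succ N ih =>
    rw [pairing_tensorPow_succ, hρ.pairing_kronecker hy, ih, List.ofFn_succ, List.prod_cons]
    rfl

variable [Fintype κ] [DecidableEq κ] [Fintype κ'] [DecidableEq κ']

theorem IsComatrix.comul2_apply (hx : IsComatrix R x) (i j : κ) :
    comul2 (R := R) (x i j) = ∑ p : κ × κ, x i p.1 ⊗ₜ[R] (x p.1 p.2 ⊗ₜ[R] x p.2 j) := by
  simp [comul2, hx.comul_apply, TensorProduct.tmul_sum, Fintype.sum_prod_type]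

theorem IsComatrix.counit_mul_counit (hx : IsComatrix R x) (hy : IsComatrix R y) (k l : κ)
    (i j : ι) : Coalgebra.counit (R := R) (x k l) * Coalgebra.counit (R := R) (y i j) =
      (1 : Matrix κ κ (Matrix ι ι R)) k l i j := by
  rw [hx.counit_apply, hy.counit_apply, Matrix.one_apply]
  split_ifs <;> simp_all [Matrix.one_apply]

theorem IsComatrix.kronecker (hx : IsComatrix R x) (hx' : IsComatrix R x') :
    IsComatrix R (x ⊗ₖ x') where
  comul_apply i j := by
    simp [hx.comul_apply, hx'.comul_apply, Finset.sum_mul_sum, Fintype.sum_prod_type]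
  counit_apply i j := by
    simp [hx.counit_apply, hx'.counit_apply, Prod.ext_iff, and_comm, ← ite_and]

theorem IsComatrix.submatrix (hx : IsComatrix R x) (e : κ' ≃ κ) :
    IsComatrix R (x.submatrix e e) where
  comul_apply i j := by
    simp [hx.comul_apply, ← e.sum_comp]
  counit_apply i j := by
    simp [hx.counit_apply]

theorem IsComatrix.tensorPow (hx : IsComatrix R x) : ∀ N, IsComatrix R (tensorPow x N)
  | 0 => by
    rw [tensorPow_zero]
    exact ⟨fun _ _ => by simp [Algebra.TensorProduct.one_def],
      fun i j => by simp [Subsingleton.elim i j]⟩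
  | N + 1 => by
    rw [tensorPow_succ]
    exact (hx.kronecker (hx.tensorPow N)).submatrix _

theorem IsConvInv.pairing_inv_mul_pairing (h : IsConvInv ρ ρinv) (hx : IsComatrix R x)
    (hy : IsComatrix R y) : pairing ρinv x y * pairing ρ x y = 1 := by
  ext k l i j
  rw [← hx.counit_mul_counit hy,
    ← (h.sum_mul_eq (hx.comul_apply k l) (hy.comul_apply i j)).1]
  simp [Matrix.mul_apply, Matrix.sum_apply, pairing]

theorem IsConvInv.pairing_mul_pairing_inv (h : IsConvInv ρ ρinv) (hx : IsComatrix R x)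
    (hy : IsComatrix R y) : pairing ρ x y * pairing ρinv x y = 1 := by
  ext k l i j
  rw [← hx.counit_mul_counit hy,
    ← (h.sum_mul_eq (hx.comul_apply k l) (hy.comul_apply i j)).2]
  simp [Matrix.mul_apply, Matrix.sum_apply, pairing]

theorem IsCopConvInv.transpose_pairing_mul_transpose_pairing (h : IsCopConvInv ρ ρt)
    (hx : IsComatrix R x) (hy : IsComatrix R y) :
    (pairing ρ x y)ᵀ * (pairing ρt x y)ᵀ = 1 := by
  ext l k i j
  rw [← Matrix.transpose_one, Matrix.transpose_apply, ← hx.counit_mul_counit hy,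
    ← h.sum_mul_eq (hx.comul_apply k l) (hy.comul_apply i j)]
  simp [Matrix.mul_apply, Matrix.sum_apply, pairing, mul_comm]

theorem IsConvInv.pairing_kronecker (h : IsConvInv ρ ρinv) (hρ : IsDQT ρ) (hx : IsComatrix R x)
    (hx' : IsComatrix R x') (hy : IsComatrix R y) (k l : κ × κ') :
    pairing ρinv (x ⊗ₖ x') y k l = pairing ρinv x' y k.2 l.2 * pairing ρinv x y k.1 l.1 := by
  let Q : Matrix (κ × κ') (κ × κ') (Matrix ι ι R) :=
    Matrix.of fun k l => pairing ρinv x' y k.2 l.2 * pairing ρinv x y k.1 l.1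
  have hQ : Q * pairing ρ (x ⊗ₖ x') y = 1 := by
    ext1 k l
    calc (Q * pairing ρ (x ⊗ₖ x') y) k l
        = ∑ m', pairing ρinv x' y k.2 m' * (pairing ρinv x y * pairing ρ x y) k.1 l.1 *
            pairing ρ x' y m' l.2 := by
          simp [Q, Matrix.mul_apply, Fintype.sum_prod_type_right, hρ.pairing_kronecker hy,
            Finset.mul_sum, Finset.sum_mul, mul_assoc]
      _ = if k.1 = l.1 then (pairing ρinv x' y * pairing ρ x' y) k.2 l.2 else 0 := by
          rw [h.pairing_inv_mul_pairing hx hy]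
          split_ifs with hkl <;> simp [Matrix.mul_apply, Matrix.one_apply (i := k.1), hkl]
      _ = (1 : Matrix (κ × κ') (κ × κ') (Matrix ι ι R)) k l := by
          simp [h.pairing_inv_mul_pairing hx' hy, Matrix.one_apply, Prod.ext_iff, ite_and]
  exact congrFun₂ (left_inv_eq_right_inv hQ
    (h.pairing_mul_pairing_inv (hx.kronecker hx') hy)).symm k l

theorem IsConvInv.pairing_tensorPow (h : IsConvInv ρ ρinv) (hρ : IsDQT ρ) (hx : IsComatrix R x)
    (hy : IsComatrix R y) {N : ℕ} (K L : Fin N → κ) :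
    pairing ρinv (tensorPow x N) y K L =
      (List.ofFn fun i : Fin N => pairing ρinv x y (K i.rev) (L i.rev)).prod := by
  induction N with
  | zero =>
    have := congrFun₂ (h.pairing_inv_mul_pairing (hx.tensorPow 0) hy) K L
    simpa [Matrix.mul_apply, hρ.pairing_tensorPow hy, Matrix.one_apply (i := K),
      Subsingleton.elim _ K] using this
  | succ N ih =>
    rw [pairing_tensorPow_succ, h.pairing_kronecker hρ hx (hx.tensorPow N) hy, ih, List.ofFn_succ']
    simp [Fin.rev_castSucc, Fin.tail]

theorem CovChar.cmul_eq_smul (h : CovChar ρ ρt cmul) (hx : IsComatrix R x) (hy : IsComatrix R y)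
    (α : κ) (j : ι) : (fun β i => cmul (x α β) (y i j)) =
      (pairing ρt x y)ᵀ • fun t => (pairing ρ x y • fun s i => x s t * y i j) α := by
  ext β i
  rw [h.eq_sum (hx.comul2_apply α β) (hy.comul2_apply i j), Fintype.sum_prod_type_right]
  simp only [Fintype.sum_prod_type, Matrix.Module.smul_apply, Finset.smul_sum, mul_smul,
    Finset.sum_apply, pairing, Matrix.transpose_apply, Matrix.map_apply]

/-- `𝓡(a₍₂₎, b₍₁₎) a₍₁₎ ⬝ b₍₂₎ = 𝓡(a₍₁₎, b₍₁₎) a₍₂₎ b₍₂₎`. -/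
theorem CovChar.transpose_pairing_smul_cmul (h : CovChar ρ ρt cmul) (hρt : IsCopConvInv ρ ρt)
    (hx : IsComatrix R x) (hy : IsComatrix R y) (α : κ) (j : ι) :
    ((pairing ρ x y)ᵀ • fun β i => cmul (x α β) (y i j)) =
      fun l => (pairing ρ x y • fun s i => x s l * y i j) α := by
  rw [h.cmul_eq_smul hx hy, smul_smul, hρt.transpose_pairing_mul_transpose_pairing hx hy, one_smul]

theorem CovChar.mul_eq_sum_smul_cmul (h : CovChar ρ ρt cmul) (hρt : IsCopConvInv ρ ρt)
    (hρinv : IsConvInv ρ ρinv) (hx : IsComatrix R x) (hy : IsComatrix R y) (k l : κ) (j : ι) :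
    (fun i => x k l * y i j) =
      ∑ α, ∑ β, pairing ρinv x y k α • pairing ρ x y β l • fun i => cmul (x α β) (y i j) := by
  calc (fun i => x k l * y i j)
      = (pairing ρinv x y • pairing ρ x y • fun s i => x s l * y i j) k := by
        rw [smul_smul, hρinv.pairing_inv_mul_pairing hx hy, one_smul]
    _ = ∑ α, pairing ρinv x y k α • ((pairing ρ x y)ᵀ • fun β i => cmul (x α β) (y i j)) l := by
        simp only [h.transpose_pairing_smul_cmul hρt hx hy]
        rfl
    _ = _ := by
        simp only [← Finset.smul_sum]
        rfl

end Comatrix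

section Paths

variable {R M ι : Type*} [CommRing R] [AddCommGroup M] [Module R M] [Fintype ι] [DecidableEq ι]

theorem prod_ofFn_smul_apply {N : ℕ} (m : Fin N → Matrix ι ι R) (v : ι → M) (a : ι) :
    ((List.ofFn m).prod • v) a = ∑ γ : Fin (N + 1) → ι, if γ 0 = a then
      (∏ i, m i (γ i.castSucc) (γ i.succ)) • v (γ (Fin.last N)) else 0 := by
  induction N generalizing a with
  | zero => simp [← (Equiv.funUnique (Fin 1) ι).symm.sum_comp, Matrix.one_apply]
  | succ N ih =>
    rw [← (Fin.consEquiv fun _ => ι).sum_comp, Fintype.sum_prod_type_right, List.ofFn_succ,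
      List.prod_cons, mul_smul]
    simp only [Matrix.Module.smul_apply, ih, Finset.smul_sum]
    rw [Finset.sum_comm]
    simp [Fin.consEquiv, Fin.prod_univ_succ, mul_smul, ← Fin.succ_last]

theorem prod_ofFn_smul_prod_ofFn_smul_apply {N N' : ℕ} (m : Fin N → Matrix ι ι R)
    (m' : Fin N' → Matrix ι ι R) (v : ι → M) (a : ι) :
    ((List.ofFn m).prod • (List.ofFn m').prod • v) a =
      ∑ γ : Fin (N + 1) → ι, ∑ δ : Fin (N' + 1) → ι,
        if γ 0 = a ∧ γ (Fin.last N) = δ 0 then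
          ((∏ i, m i (γ i.castSucc) (γ i.succ)) * ∏ i, m' i (δ i.castSucc) (δ i.succ)) •
            v (δ (Fin.last N')) else 0 := by
  rw [prod_ofFn_smul_apply m]
  refine Finset.sum_congr rfl fun γ _ => ?_
  simp only [prod_ofFn_smul_apply m', eq_comm (a := γ (Fin.last N)), ite_and, mul_smul]
  split_ifs <;> simp [Finset.smul_sum]

end Paths

theorem braid_formula_general
    {R : Type u} [CommRing R] {A : Type u} [Ring A] [Bialgebra R A]
    {ι : Type*} [Fintype ι] [DecidableEq ι] {x : Matrix ι ι A} (hx : IsComatrix R x)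
    {ρ ρt ρinv : A →ₗ[R] A →ₗ[R] R} (hρ : IsDQT ρ) (hρt : IsCopConvInv ρ ρt)
    (hρinv : IsConvInv ρ ρinv) {cmul : A → A → A} (hcmul : CovChar ρ ρt cmul)
    {N : ℕ} (k l : Fin (N + 1) → ι) :
    ((List.finRange (N + 1)).map (fun m => x (k m) (l m))).prod =
      ∑ α : Fin N → ι, ∑ β : Fin N → ι,
        ∑ γ : Fin (N + 1) → ι, ∑ δ : Fin (N + 1) → ι,
          if γ 0 = k (Fin.last N) ∧ γ (Fin.last N) = δ 0 then
            (∏ i : Fin N,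
                (ρinv (x (k i.rev.castSucc) (α i.rev)) (x (γ i.castSucc) (γ i.succ)) *
                  ρ (x (β i) (l i.castSucc)) (x (δ i.castSucc) (δ i.succ)))) •
              cmul (((List.finRange N).map (fun m => x (α m) (β m))).prod)
                (x (δ (Fin.last N)) (l (Fin.last N)))
          else 0 := by
  calc tensorPow x (N + 1) k l
      = tensorPow x N (Fin.init k) (Fin.init l) * x (k (Fin.last N)) (l (Fin.last N)) :=
        tensorPow_succ_apply_last x k l
    _ = ∑ α, ∑ β, (pairing ρinv (tensorPow x N) x (Fin.init k) α •
          pairing ρ (tensorPow x N) x β (Fin.init l) •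
            fun i => cmul (tensorPow x N α β) (x i (l (Fin.last N)))) (k (Fin.last N)) := by
        rw [congrFun (hcmul.mul_eq_sum_smul_cmul hρt hρinv (hx.tensorPow N) hx _ _ _)]
        simp only [Finset.sum_apply]
    _ = _ := by
        simp only [hρinv.pairing_tensorPow hρ hx hx, hρ.pairing_tensorPow hx,
          prod_ofFn_smul_prod_ofFn_smul_apply, ← Finset.prod_mul_distrib]
        rfl

/-- The braid/twisting formula expressing an `(N+1)`-fold product of generators of
`O_q(M_n)` through the covariantized product:
`x^{k₁}_{l₁} ⋯ x^{k_N}_{l_N} x^{k_{N+1}}_{l_{N+1}}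
  = ∑ (∏_{i=1}^{N} 𝓡⁻¹(x^{k_{N−i+1}}_{α_{N−i+1}}, x^{γ_i}_{γ_{i+1}}) 𝓡(x^{β_i}_{l_i}, x^{δ_i}_{δ_{i+1}}))
      (x^{α₁}_{β₁} ⋯ x^{α_N}_{β_N}) ⬝ x^{δ_{N+1}}_{l_{N+1}}`,
summed over all `α, β : {1,…,N} → {1,…,n}` and `γ, δ : {1,…,N+1} → {1,…,n}` with
`γ₁ = k_{N+1}` and `γ_{N+1} = δ₁`.  (All indices are recorded `0`-indexed.) -/
theorem braid_formula
    {R : Type u} [CommRing R] (n : ℕ) (hn : 2 ≤ n) (qr : Rˣ)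
    {A : Type u} [Ring A] [Bialgebra R A] (x : Fin n → Fin n → A)
    (hx : OqMnRels n (qr ^ n) x)
    (hxuniv : ∀ (B : Type u) [Ring B] [Algebra R B] (y : Fin n → Fin n → B),
      OqMnRels n (qr ^ n) y → ∃! f : A →ₐ[R] B, ∀ i j, f (x i j) = y i j)
    (hΔ : ∀ i j, Coalgebra.comul (R := R) (x i j) = ∑ k, x i k ⊗ₜ[R] x k j)
    (hε : ∀ i j, Coalgebra.counit (R := R) (x i j) = if i = j then (1 : R) else 0)
    (ρ : A →ₗ[R] A →ₗ[R] R) (hρ : IsDQT ρ)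
    (hρx : ∀ i j k l, ρ (x i j) (x k l) = RmatVal n qr i j k l)
    (ρt : A →ₗ[R] A →ₗ[R] R) (hρt : IsCopConvInv ρ ρt)
    (cmul : A → A → A) (hcmul : CovChar ρ ρt cmul)
    (ρinv : A →ₗ[R] A →ₗ[R] R) (hρinv : IsConvInv ρ ρinv)
    (N : ℕ) (hN : 1 ≤ N) (k l : Fin (N + 1) → Fin n) :
    ((List.finRange (N + 1)).map (fun m => x (k m) (l m))).prod =
      ∑ α : Fin N → Fin n, ∑ β : Fin N → Fin n,
        ∑ γ : Fin (N + 1) → Fin n, ∑ δ : Fin (N + 1) → Fin n,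
          if γ 0 = k (Fin.last N) ∧ γ (Fin.last N) = δ 0 then
            (∏ i : Fin N,
                (ρinv (x (k i.rev.castSucc) (α i.rev)) (x (γ i.castSucc) (γ i.succ)) *
                  ρ (x (β i) (l i.castSucc)) (x (δ i.castSucc) (δ i.succ)))) •
              cmul (((List.finRange N).map (fun m => x (α m) (β m))).prod)
                (x (δ (Fin.last N)) (l (Fin.last N)))
          else 0 := by
  exact braid_formula_general (x := Matrix.of x) ⟨hΔ, hε⟩ hρ hρt hρinv hcmul k l

end
end
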